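/- arXiv:2310.02912 — 3 statements merged into one kernel-verified Lean document; each statement's English description precedes it below -/
import Mathlib

section
/- Let M be an absolutely indecomposable, locally free representation of a quiver Q over O_α = F_q[t]/(t^α) of rank vector r. Then #Aut(M) = (1 − q^{-1}) · #End(M) = q^{α⟨r,r⟩} · (1 − q^{-1}) · #Ext^1(M, M). -/
/-- A quiver: a set of vertices, a set of arrows, with source and target maps. -/
structure Quiv where
  V : Type
  A : Type
  s : A → V
  t : A → V

/-- The truncated polynomial ring `O_α = K[t]/(t^α)`. -/
abbrev Oalpha (K : Type) [Field K] (α : ℕ) : Type :=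
  Polynomial K ⧸ Ideal.span {(Polynomial.X : Polynomial K) ^ α}

/-- The standard complex computing `End(M)` and `Ext¹(M, M)` for the locally free
representation `M` of rank vector `r` given by the matrices `x`: the `K`-linear map
`⊕_i Hom(M_i, M_i) → ⊕_{a : i → j} Hom(M_i, M_j)`,
`φ ↦ (φ_{t a} ∘ x_a − x_a ∘ φ_{s a})_a`.  Its kernel is `End(M)` and its cokernel
is `Ext¹(M, M)`. -/
noncomputable def dMap (K : Type) [Field K] (α : ℕ) (Q : Quiv) (r : Q.V → ℕ)
    (x : ∀ a : Q.A, Matrix (Fin (r (Q.t a))) (Fin (r (Q.s a))) (Oalpha K α)) :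
    (∀ i : Q.V, Matrix (Fin (r i)) (Fin (r i)) (Oalpha K α)) →ₗ[K]
      (∀ a : Q.A, Matrix (Fin (r (Q.t a))) (Fin (r (Q.s a))) (Oalpha K α)) where
  toFun φ := fun a => φ (Q.t a) * x a - x a * φ (Q.s a)
  map_add' φ ψ := by
    funext a
    simp only [Pi.add_apply, Matrix.add_mul, Matrix.mul_add]
    abel
  map_smul' c φ := by
    funext a
    simp [Matrix.smul_mul, Matrix.mul_smul, smul_sub]


/-- The endomorphism ring `End(M)` of the representation `M` corresponding to `x`:
tuples of matrices commuting with all the structure maps. -/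
def EndOf (Q : Quiv) (r : Q.V → ℕ) (R : Type) [CommRing R]
    (x : ∀ a : Q.A, Matrix (Fin (r (Q.t a))) (Fin (r (Q.s a))) R) : Type :=
  {φ : ∀ i : Q.V, Matrix (Fin (r i)) (Fin (r i)) R //
    ∀ a : Q.A, φ (Q.t a) * x a = x a * φ (Q.s a)}

open Matrix in
/-- The automorphism group `Aut(M)` of the representation corresponding to `x`:
tuples of invertible matrices commuting with all the structure maps. -/
def AutOf (Q : Quiv) (r : Q.V → ℕ) (R : Type) [CommRing R]
    (x : ∀ a : Q.A, Matrix (Fin (r (Q.t a))) (Fin (r (Q.s a))) R) : Type :=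
  {g : ∀ i : Q.V, GL (Fin (r i)) R //
    ∀ a : Q.A, (g (Q.t a) : Matrix _ _ R) * x a = x a * (g (Q.s a) : Matrix _ _ R)}

/-- A locally free representation (given by matrices `x` over a ring `R`) is
indecomposable if it is nonzero and admits no idempotent endomorphism other than `0`
and the identity (equivalently, it is not the direct sum of two nonzero
subrepresentations). -/
def IsIndecomposable (Q : Quiv) (r : Q.V → ℕ) (R : Type) [CommRing R]
    (x : ∀ a : Q.A, Matrix (Fin (r (Q.t a))) (Fin (r (Q.s a))) R) : Prop :=
  (∃ i : Q.V, r i ≠ 0) ∧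
    ∀ φ : ∀ i : Q.V, Matrix (Fin (r i)) (Fin (r i)) R,
      (∀ a : Q.A, φ (Q.t a) * x a = x a * φ (Q.s a)) →
      (∀ i : Q.V, φ i * φ i = φ i) →
      (∀ i : Q.V, φ i = 0) ∨ (∀ i : Q.V, φ i = 1)

/-- The ring homomorphism `K[t]/(t^α) → L[t]/(t^α)` induced by a field embedding
`K → L` (base change of truncated polynomial rings). -/
noncomputable def truncBaseChange (K L : Type) [Field K] [Field L] (f : K →+* L)
    (α : ℕ) : Oalpha K α →+* Oalpha L α :=
  Ideal.quotientMap (Ideal.span {(Polynomial.X : Polynomial L) ^ α})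
    (Polynomial.mapRingHom f)
    (by rw [← Ideal.map_le_iff_le_comap, Ideal.map_span, Set.image_singleton]
        simp)

/-- A representation over `O_α = F_q[t]/(t^α)` is absolutely indecomposable if its
base change to `F̄_q[t]/(t^α)` is indecomposable. -/
noncomputable def IsAbsolutelyIndecomposable (K : Type) [Field K] (α : ℕ) (Q : Quiv)
    (r : Q.V → ℕ)
    (x : ∀ a : Q.A, Matrix (Fin (r (Q.t a))) (Fin (r (Q.s a))) (Oalpha K α)) : Prop :=
  IsIndecomposable Q r (Oalpha (AlgebraicClosure K) α)
    (fun a => (x a).map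
      (truncBaseChange K (AlgebraicClosure K) (algebraMap K (AlgebraicClosure K)) α))

theorem exists_nilp_of_idem {F A : Type} [Field F] [IsAlgClosed F] [Ring A] [Algebra F A]
    [Module.Finite F A] [Nontrivial A] (a : A)
    (h : ∀ p : Polynomial F, Polynomial.aeval a p * Polynomial.aeval a p = Polynomial.aeval a p →
      Polynomial.aeval a p = 0 ∨ Polynomial.aeval a p = 1) :
    ∃ c : F, IsNilpotent (a - algebraMap F A c) := by
  have hint : IsIntegral F a := IsIntegral.of_finite F a
  obtain ⟨c, hc⟩ := IsAlgClosed.exists_root (minpoly F a) (minpoly.degree_pos hint).ne'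
  obtain ⟨g, hg, hndvd⟩ :=
    Polynomial.exists_eq_pow_rootMultiplicity_mul_and_not_dvd (minpoly F a) (minpoly.ne_zero hint) c
  generalize Polynomial.rootMultiplicity c (minpoly F a) = k at hg
  have hcop : IsCoprime ((Polynomial.X - Polynomial.C c) ^ k) g :=
    (((Polynomial.irreducible_X_sub_C c).coprime_iff_not_dvd).2 hndvd).pow_left
  obtain ⟨u, v, huv⟩ := hcop
  have hm : Polynomial.aeval a ((Polynomial.X - Polynomial.C c) ^ k) * Polynomial.aeval a g = 0 := by
    rw [← map_mul, ← hg, minpoly.aeval]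
  have hpk : Polynomial.aeval a ((Polynomial.X - Polynomial.C c) ^ k)
      = (a - algebraMap F A c) ^ k := by simp
  have hidem : Polynomial.aeval a (v * g) * Polynomial.aeval a (v * g)
      = Polynomial.aeval a (v * g) := by
    have : v * g * (v * g) = v * g - u * v * ((Polynomial.X - Polynomial.C c) ^ k * g) := by
      linear_combination (v * g) * huv
    rw [← map_mul, this, map_sub, map_mul _ (u * v), ← hg, minpoly.aeval]
    simp
  rcases h _ hidem with h0 | h1
  · exfalso
    have : Polynomial.aeval a g = 0 := by
      have e : g = u * ((Polynomial.X - Polynomial.C c) ^ k * g) + g * (v * g) := by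
        linear_combination (-g) * huv
      rw [e, map_add, map_mul _ u, map_mul _ _ g, hm, map_mul _ g, h0]
      simp
    exact hndvd ((Polynomial.dvd_iff_isRoot.2 hc).trans (minpoly.dvd F a this))
  · refine ⟨c, k, ?_⟩
    have e : (Polynomial.X - Polynomial.C c) ^ k * (v * g)
        = v * ((Polynomial.X - Polynomial.C c) ^ k * g) := by ring
    rw [← hpk, ← mul_one (Polynomial.aeval a _), ← h1, ← map_mul, e, map_mul, map_mul _ _ g, hm,
      mul_zero]

theorem not_unit_of_nilp {A : Type} [Ring A] [Nontrivial A] {a : A} (h : IsNilpotent a) :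
    ¬ IsUnit a := by
  rintro hu
  obtain ⟨n, hn⟩ := h
  have := hu.pow n
  rw [hn] at this
  exact not_isUnit_zero this

theorem card_units_of_nilp {K A : Type} [Field K] [Ring A] [Algebra K A] [Finite A]
    [Nontrivial A] (S : Subalgebra K A)
    (h : ∀ a ∈ S, ∃ c : K, IsNilpotent (a - algebraMap K A c)) :
    Nat.card {a : A // a ∈ S ∧ IsUnit a} + Nat.card {a : A // a ∈ S ∧ IsNilpotent a}
        = Nat.card {a : A // a ∈ S} ∧
      Nat.card K * Nat.card {a : A // a ∈ S ∧ IsNilpotent a} = Nat.card {a : A // a ∈ S} := by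
  constructor
  · rw [← Nat.card_sum]
    refine Nat.card_congr (Equiv.ofBijective
      (Sum.elim (fun a => ⟨a.1, a.2.1⟩) (fun a => ⟨a.1, a.2.1⟩)) ⟨?_, ?_⟩)
    · rintro (⟨a, ha, ha'⟩ | ⟨a, ha, ha'⟩) (⟨b, hb, hb'⟩ | ⟨b, hb, hb'⟩) hab <;>
        simp only [Sum.elim_inl, Sum.elim_inr, Subtype.mk.injEq] at hab <;> subst hab
      · rfl
      · exact absurd ha' (not_unit_of_nilp hb')
      · exact absurd hb' (not_unit_of_nilp ha')
      · rfl
    · rintro ⟨a, ha⟩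
      obtain ⟨c, hc⟩ := h a ha
      by_cases h0 : c = 0
      · subst h0
        exact ⟨Sum.inr ⟨a, ha, by simpa using hc⟩, rfl⟩
      · refine ⟨Sum.inl ⟨a, ha, ?_⟩, rfl⟩
        have := hc.isUnit_add_left_of_commute ((IsUnit.mk0 c h0).map (algebraMap K A))
          (Algebra.commutes c _).symm
        simpa using this
  · rw [← Nat.card_prod]
    refine Nat.card_congr (Equiv.ofBijective
      (fun p => ⟨algebraMap K A p.1 + p.2.1, S.add_mem (S.algebraMap_mem _) p.2.2.1⟩) ⟨?_, ?_⟩)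
    · rintro ⟨c, a, ha, ha'⟩ ⟨d, b, hb, hb'⟩ hab
      simp only [Subtype.mk.injEq] at hab
      have hcd : c = d := by
        by_contra hne
        have hu : IsUnit (algebraMap K A (d - c)) :=
          (IsUnit.mk0 _ (sub_ne_zero.2 (Ne.symm hne))).map _
        have hb2 : a = algebraMap K A (d - c) + b := by
          rw [map_sub, sub_add_eq_add_sub, ← hab]; simp
        refine not_unit_of_nilp ha' ?_
        rw [hb2]
        exact hb'.isUnit_add_left_of_commute hu (Algebra.commutes _ _).symm
      subst hcd
      simpa using hab
    · rintro ⟨a, ha⟩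
      obtain ⟨c, hc⟩ := h a ha
      exact ⟨⟨c, a - algebraMap K A c, S.sub_mem ha (S.algebraMap_mem c), hc⟩, by simp⟩

/-- The endomorphism algebra as a subalgebra. -/
def endSub (Q : Quiv) (r : Q.V → ℕ) (F R : Type) [Field F] [CommRing R] [Algebra F R]
    (x : ∀ a : Q.A, Matrix (Fin (r (Q.t a))) (Fin (r (Q.s a))) R) :
    Subalgebra F (∀ i : Q.V, Matrix (Fin (r i)) (Fin (r i)) R) where
  carrier := {φ | ∀ a : Q.A, φ (Q.t a) * x a = x a * φ (Q.s a)}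
  mul_mem' {φ ψ} hφ hψ a := by
    simp only [Pi.mul_apply]
    rw [Matrix.mul_assoc, hψ a, ← Matrix.mul_assoc, hφ a, Matrix.mul_assoc]
  add_mem' {φ ψ} hφ hψ a := by
    simp only [Pi.add_apply]
    rw [Matrix.add_mul, Matrix.mul_add, hφ a, hψ a]
  algebraMap_mem' c a := by
    simp [Algebra.algebraMap_eq_smul_one]

theorem truncBaseChange_mk (K L : Type) [Field K] [Field L] (f : K →+* L) (α : ℕ)
    (p : Polynomial K) : truncBaseChange K L f α (Ideal.Quotient.mk _ p)
      = Ideal.Quotient.mk _ (p.map f) := rfl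

theorem truncBaseChange_injective (K L : Type) [Field K] [Field L] (f : K →+* L) (α : ℕ) :
    Function.Injective (truncBaseChange K L f α) := by
  rw [injective_iff_map_eq_zero]
  intro y hy
  obtain ⟨p, rfl⟩ := Ideal.Quotient.mk_surjective y
  rw [truncBaseChange_mk, Ideal.Quotient.eq_zero_iff_mem, Ideal.mem_span_singleton,
    Polynomial.X_pow_dvd_iff] at hy
  rw [Ideal.Quotient.eq_zero_iff_mem, Ideal.mem_span_singleton, Polynomial.X_pow_dvd_iff]
  intro d hd
  have := hy d hd
  rwa [Polynomial.coeff_map, map_eq_zero] at this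

theorem truncBaseChange_algebraMap (K L : Type) [Field K] [Field L] (f : K →+* L) (α : ℕ) (c : K) :
    truncBaseChange K L f α (algebraMap K _ c) = algebraMap L (Oalpha L α) (f c) := by
  have e : algebraMap K (Oalpha K α) c = Ideal.Quotient.mk _ (Polynomial.C c) := rfl
  have e' : algebraMap L (Oalpha L α) (f c) = Ideal.Quotient.mk _ (Polynomial.C (f c)) := rfl
  rw [e, e', truncBaseChange_mk, Polynomial.map_C]

theorem mem_of_truncBaseChange (K L : Type) [Field K] [Field L] (f : K →+* L) (α : ℕ)
    (hα : 1 ≤ α) (y : Oalpha K α) (c : L)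
    (h : truncBaseChange K L f α y = algebraMap L (Oalpha L α) c) : ∃ k, f k = c := by
  obtain ⟨p, rfl⟩ := Ideal.Quotient.mk_surjective y
  have e' : algebraMap L (Oalpha L α) c = Ideal.Quotient.mk _ (Polynomial.C c) := rfl
  rw [truncBaseChange_mk, e', Ideal.Quotient.eq, Ideal.mem_span_singleton,
    Polynomial.X_pow_dvd_iff] at h
  have := h 0 hα
  refine ⟨p.coeff 0, ?_⟩
  simpa [sub_eq_zero] using this

theorem Oalpha_finite (K : Type) [Field K] (α : ℕ) : Module.Finite K (Oalpha K α) :=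
  Polynomial.Monic.finite_quotient (Polynomial.monic_X_pow α)

theorem Oalpha_nontrivial (K : Type) [Field K] (α : ℕ) (hα : 1 ≤ α) : Nontrivial (Oalpha K α) := by
  refine Ideal.Quotient.nontrivial_iff.2 ?_
  rw [Ne, Ideal.span_singleton_eq_top, isUnit_pow_iff (by omega)]
  exact Polynomial.not_isUnit_X

theorem nilp_of_end (K : Type) [Field K] [Fintype K]
    (α : ℕ) (hα : 1 ≤ α) (Q : Quiv) [Fintype Q.V] (r : Q.V → ℕ)
    (x : ∀ a : Q.A, Matrix (Fin (r (Q.t a))) (Fin (r (Q.s a))) (Oalpha K α))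
    (hx : IsAbsolutelyIndecomposable K α Q r x) (φ : ∀ i, Matrix (Fin (r i)) (Fin (r i)) (Oalpha K α))
    (hφ : φ ∈ endSub Q r K (Oalpha K α) x) :
    ∃ c : K, IsNilpotent (φ - algebraMap K _ c) := by
  classical
  set L := AlgebraicClosure K with hL
  set f : K →+* L := algebraMap K L with hf
  have := Oalpha_finite L α
  have := Oalpha_nontrivial L α hα
  set B := ∀ i, Matrix (Fin (r i)) (Fin (r i)) (Oalpha L α) with hB
  obtain ⟨⟨i₀, hi₀⟩, hidem⟩ := hx
  have : Nonempty (Fin (r i₀)) := ⟨⟨0, by omega⟩⟩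
  have : Nontrivial B := Pi.nontrivial_at i₀
  set T := truncBaseChange K L f α with hT
  let Φ : (∀ i, Matrix (Fin (r i)) (Fin (r i)) (Oalpha K α)) →+* B :=
    RingHom.pi (fun i => (T.mapMatrix).comp (Pi.evalRingHom _ i))
  have hΦ : ∀ ψ i, Φ ψ i = (ψ i).map T := fun ψ i => rfl
  have hΦinj : Function.Injective Φ := by
    intro ψ ψ' h
    funext i
    exact Matrix.map_injective (truncBaseChange_injective K L f α) (congrFun h i)
  have hΦalg : ∀ c : K, Φ (algebraMap K _ c) = algebraMap L B (f c) := by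
    intro c
    funext i
    ext j k
    rw [hΦ, Matrix.map_apply, Pi.algebraMap_apply, Pi.algebraMap_apply,
      Matrix.algebraMap_matrix_apply, Matrix.algebraMap_matrix_apply]
    split_ifs
    · exact truncBaseChange_algebraMap K L f α c
    · exact map_zero _
  have hmem : Φ φ ∈ endSub Q r L (Oalpha L α) (fun a => (x a).map T) := by
    intro a
    change (φ (Q.t a)).map T * (x a).map T = (x a).map T * (φ (Q.s a)).map T
    rw [← Matrix.map_mul, ← Matrix.map_mul, hφ a]
  obtain ⟨c, hc⟩ := exists_nilp_of_idem (F := L) (Φ φ) (by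
    intro p hp
    have hpm : Polynomial.aeval (Φ φ) p ∈ endSub Q r L (Oalpha L α) (fun a => (x a).map T) :=
      Algebra.adjoin_le (Set.singleton_subset_iff.2 hmem)
        (Polynomial.aeval_mem_adjoin_singleton L (Φ φ))
    rcases hidem _ hpm (fun i => congrFun hp i) with h | h
    · exact Or.inl (funext h)
    · exact Or.inr (funext h))
  obtain ⟨n, hn⟩ := hc
  obtain ⟨p, hpchar⟩ := CharP.exists K
  obtain ⟨m, hp, hcard⟩ := FiniteField.card K p
  have : Fact p.Prime := ⟨hp⟩
  have : CharP L p := charP_of_injective_algebraMap (algebraMap K L).injective p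
  have : CharP B p := charP_of_injective_algebraMap (algebraMap L B).injective p
  have hq : 1 < Fintype.card K := Fintype.one_lt_card
  have hcard' : Fintype.card K ^ n = p ^ ((m : ℕ) * n) := by rw [hcard, pow_mul]
  have hpow : (Φ φ - algebraMap L B c) ^ Fintype.card K ^ n = 0 :=
    pow_eq_zero_of_le (Nat.lt_pow_self hq).le hn
  rw [hcard', sub_pow_char_pow_of_commute p _ (Algebra.commutes c _).symm, ← hcard',
    ← map_pow, ← map_pow, sub_eq_zero] at hpow
  have hent := congrFun (congrFun (congrFun hpow i₀) ⟨0, by omega⟩) ⟨0, by omega⟩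
  rw [hΦ, Matrix.map_apply, Pi.algebraMap_apply, Matrix.algebraMap_matrix_apply, if_pos rfl] at hent
  obtain ⟨k, hk⟩ := mem_of_truncBaseChange K L f α hα _ _ hent
  have hck : f k = c := by
    rw [← FiniteField.pow_card_pow n k, map_pow, hcard'] at hk
    have : (f k - c) ^ p ^ ((m : ℕ) * n) = 0 := by
      rw [sub_pow_char_pow, hk, sub_self]
    exact sub_eq_zero.1 (pow_eq_zero_iff (pow_ne_zero _ hp.ne_zero) |>.1 this)
  refine ⟨k, n, hΦinj ?_⟩
  rw [map_pow, map_sub, hΦalg, hck, hn, map_zero]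

/-- For an absolutely indecomposable, locally free representation `M`
(given by `x`) of `Q` over `O_α = F_q[t]/(t^α)` of rank vector `r`:
`#Aut(M) = (1 − q^{-1}) · #End(M) = q^{α⟨r,r⟩} (1 − q^{-1}) · #Ext¹(M, M)`,
with `Ext¹(M, M)` the cokernel of the standard map `dMap`. -/
theorem card_aut_of_absolutely_indecomposable (K : Type) [Field K] [Fintype K]
    (α : ℕ) (hα : 1 ≤ α) (Q : Quiv) [Fintype Q.V] [Fintype Q.A] (r : Q.V → ℕ)
    (x : ∀ a : Q.A, Matrix (Fin (r (Q.t a))) (Fin (r (Q.s a))) (Oalpha K α))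
    (hx : IsAbsolutelyIndecomposable K α Q r x) :
    (Nat.card (AutOf Q r (Oalpha K α) x) : ℚ) =
        (1 - (Nat.card K : ℚ)⁻¹) * (Nat.card (EndOf Q r (Oalpha K α) x) : ℚ) ∧
      (Nat.card (AutOf Q r (Oalpha K α) x) : ℚ) =
        (Nat.card K : ℚ) ^ ((α : ℤ) * ((∑ i : Q.V, (r i : ℤ) ^ 2) -
            ∑ a : Q.A, (r (Q.s a) : ℤ) * (r (Q.t a) : ℤ))) *
          (1 - (Nat.card K : ℚ)⁻¹) *
          (Nat.card
            ((∀ a : Q.A, Matrix (Fin (r (Q.t a))) (Fin (r (Q.s a))) (Oalpha K α)) ⧸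
              LinearMap.range (dMap K α Q r x)) : ℚ) := by
  classical
  have := Oalpha_finite K α
  have := Oalpha_nontrivial K α hα
  have : Finite (Oalpha K α) := Module.finite_of_finite K
  obtain ⟨i₀, hi₀⟩ := hx.1
  have : Nonempty (Fin (r i₀)) := ⟨⟨0, by omega⟩⟩
  have : Nontrivial (∀ i, Matrix (Fin (r i)) (Fin (r i)) (Oalpha K α)) := Pi.nontrivial_at i₀
  have : Finite (∀ i, Matrix (Fin (r i)) (Fin (r i)) (Oalpha K α)) := Module.finite_of_finite K
  obtain ⟨h1, h2⟩ := card_units_of_nilp (endSub Q r K (Oalpha K α) x)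
    (nilp_of_end K α hα Q r x hx)
  have hE : Nat.card (EndOf Q r (Oalpha K α) x)
      = Nat.card {φ // φ ∈ endSub Q r K (Oalpha K α) x} := rfl
  have hA : Nat.card (AutOf Q r (Oalpha K α) x)
      = Nat.card {φ // φ ∈ endSub Q r K (Oalpha K α) x ∧ IsUnit φ} := by
    refine Nat.card_congr (Equiv.ofBijective (fun g =>
      ⟨fun i => (g.1 i : Matrix (Fin (r i)) (Fin (r i)) (Oalpha K α)), g.2,
        Pi.isUnit_iff.2 fun i => (g.1 i).isUnit⟩) ⟨?_, ?_⟩)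
    · rintro ⟨g, hg⟩ ⟨g', hg'⟩ h
      refine Subtype.ext (funext fun i => Units.ext ?_)
      exact congrFun (congrArg Subtype.val h) i
    · rintro ⟨φ, hφ, hu⟩
      rw [Pi.isUnit_iff] at hu
      exact ⟨⟨fun i => (hu i).unit, hφ⟩, rfl⟩
  rw [← hA, ← hE] at h1
  rw [← hE] at h2
  have hq : (Nat.card K : ℚ) ≠ 0 := by
    have : Nat.card K ≠ 0 := Nat.card_pos.ne'
    exact_mod_cast this
  have hfirst : (Nat.card (AutOf Q r (Oalpha K α) x) : ℚ) =
        (1 - (Nat.card K : ℚ)⁻¹) * (Nat.card (EndOf Q r (Oalpha K α) x) : ℚ) := by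
    have h1' := congrArg (Nat.cast : ℕ → ℚ) h1
    have h2' := congrArg (Nat.cast : ℕ → ℚ) h2
    push_cast at h1' h2'
    rw [← h2'] at h1' ⊢
    field_simp
    linarith
  refine ⟨hfirst, ?_⟩
  have hK : Nat.card (EndOf Q r (Oalpha K α) x) = Nat.card (LinearMap.ker (dMap K α Q r x)) := by
    refine Nat.card_congr (Equiv.subtypeEquivRight fun φ => ?_)
    rw [LinearMap.mem_ker, funext_iff]
    exact forall_congr' fun a => sub_eq_zero.symm
  have hO : Module.finrank K (Oalpha K α) = α := by
    rw [finrank_quotient_span_eq_natDegree, Polynomial.natDegree_X_pow]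
  have d1 := LinearMap.finrank_range_add_finrank_ker (dMap K α Q r x)
  have d2 := Submodule.finrank_quotient_add_finrank (LinearMap.range (dMap K α Q r x))
  rw [Module.finrank_pi_fintype] at d1 d2
  simp only [Module.finrank_matrix, hO, Fintype.card_fin] at d1 d2
  rw [hfirst, hK, Module.natCard_eq_pow_finrank (K := K) (V := LinearMap.ker (dMap K α Q r x)),
    Module.natCard_eq_pow_finrank (K := K) (V := _ ⧸ _)]
  push_cast
  rw [← zpow_natCast, ← zpow_natCast, mul_assoc, mul_left_comm, ← zpow_add₀ hq]
  congr 2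
  zify at d1 d2
  rw [← Finset.sum_mul] at d1 d2
  have e : ∑ a : Q.A, (r (Q.s a) : ℤ) * (r (Q.t a) : ℤ)
      = ∑ a : Q.A, (r (Q.t a) : ℤ) * (r (Q.s a) : ℤ) :=
    Finset.sum_congr rfl fun a _ => mul_comm _ _
  rw [e]
  simp only [sq]
  linear_combination d1 - d2
end

section
/- Let r be an indivisible rank vector (gcd of its entries is 1) and M an indecomposable locally free representation of Q over F_q[t]/(t^α) of rank r. Then M is absolutely indecomposable. -/
open Polynomial in
theorem aux_pow_irred {K E : Type*} [Field K] [Ring E] [Algebra K E] [Module.Finite K E]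
    [Nontrivial E] (hE : ∀ e : E, e * e = e → e = 0 ∨ e = 1) (u : E) :
    ∃ (P : K[X]) (k : ℕ), Irreducible P ∧ aeval u (P ^ k) = 0 := by
  have hint : IsIntegral K u := IsIntegral.of_finite K u
  have hm0 : minpoly K u ≠ 0 := minpoly.ne_zero hint
  obtain ⟨P, hP, hPd⟩ := WfDvdMonoid.exists_irreducible_factor (minpoly.not_isUnit K u) hm0
  obtain ⟨s, hs, hns⟩ :=
    (FiniteMultiplicity.of_not_isUnit hP.not_isUnit hm0).exists_eq_pow_mul_and_not_dvd
  set k := multiplicity P (minpoly K u)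
  refine ⟨P, k, hP, ?_⟩
  obtain ⟨a, b, hab⟩ : IsCoprime (P ^ k) s :=
    ((hP.coprime_iff_not_dvd).2 hns).pow_left
  have hz : aeval u (P ^ k * s) = 0 := by rw [← hs]; exact minpoly.aeval K u
  have h1 : aeval u (a * P ^ k) + aeval u (b * s) = 1 := by
    rw [← map_add, hab, map_one]
  have hab0 : aeval u (a * P ^ k) * aeval u (b * s) = 0 := by
    rw [← map_mul, show a * P ^ k * (b * s) = (a * b) * (P ^ k * s) by ring, map_mul, hz, mul_zero]
  have hid : aeval u (a * P ^ k) * aeval u (a * P ^ k) = aeval u (a * P ^ k) := by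
    have := congrArg (aeval u (a * P ^ k) * ·) h1
    simpa only [mul_add, hab0, add_zero, mul_one] using this
  rcases hE _ hid with h | h
  · rw [h, zero_add] at h1
    rw [← mul_one (aeval u (P ^ k)), ← h1, ← map_mul,
      show P ^ k * (b * s) = b * (P ^ k * s) by ring, map_mul, hz, mul_zero]
  · exfalso
    have : aeval u s = 0 := by
      rw [← mul_one (aeval u s), ← h, ← map_mul,
        show s * (a * P ^ k) = a * (P ^ k * s) by ring, map_mul, hz, mul_zero]
    exact hns (hPd.trans (minpoly.dvd K u this))

open Polynomial in
theorem aux_sub_dvd {K S : Type*} [CommRing K] [Ring S] [Algebra K S] (x y : S) (h : Commute x y)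
    (p : K[X]) : x - y ∣ aeval x p - aeval y p := by
  induction p using Polynomial.induction_on' with
  | add p q hp hq =>
    rw [map_add, map_add, add_sub_add_comm]
    exact dvd_add hp hq
  | monomial n c =>
    obtain ⟨w, hw⟩ := h.sub_dvd_pow_sub_pow n
    refine ⟨c • w, ?_⟩
    rw [aeval_monomial, aeval_monomial, ← mul_sub, hw, mul_smul_comm, Algebra.smul_def]

open Polynomial in
theorem aux_deg {K : Type*} [Field K] {n : ℕ} (B : Matrix (Fin n) (Fin n) K) (P : K[X]) (k : ℕ)
    (hP : Irreducible P) (h : aeval B (P ^ k) = 0) : P.natDegree ∣ n := by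
  have hc : Commute (Matrix.scalar (Fin n) (X : K[X])) (B.map C) :=
    Matrix.scalar_commute _ (fun r => Commute.all _ _) _
  obtain ⟨w, hw⟩ := aux_sub_dvd (K := K) _ _ hc (P ^ k)
  have h1 : aeval (Matrix.scalar (Fin n) (X : K[X])) (P ^ k)
      = Matrix.scalar (Fin n) (P ^ k) := by
    have := aeval_algHom_apply (Matrix.scalarAlgHom (Fin n) K (α := K[X])) (X : K[X]) (P ^ k)
    rw [aeval_X_left_apply] at this
    exact this
  have h2 : aeval (B.map C) (P ^ k) = 0 := by
    have := aeval_algHom_apply (AlgHom.mapMatrix (m := Fin n) (CAlgHom (R := K) (A := K))) B (P ^ k)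
    rw [h, map_zero] at this
    exact this
  rw [h1, h2, sub_zero] at hw
  have hd : B.charpoly ∣ (P ^ k) ^ n := by
    have := congrArg Matrix.det hw
    rw [Matrix.det_mul] at this
    refine ⟨w.det, ?_⟩
    rw [Matrix.charpoly, Matrix.charmatrix]
    simpa using this
  rw [← pow_mul] at hd
  obtain ⟨j, -, hj⟩ := (dvd_prime_pow hP.prime _).1 hd
  have := natDegree_eq_of_degree_eq (degree_eq_degree_of_associated hj)
  rw [Matrix.charpoly_natDegree_eq_dim, natDegree_pow, Fintype.card_fin] at this
  exact ⟨j, by rw [this, mul_comm]⟩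

theorem aux_nilp_mem {E : Type*} [Ring E] [Nontrivial E]
    (hE : ∀ u : E, IsNilpotent u ∨ IsUnit u) (x : E) (hx : IsNilpotent x) :
    x ∈ Ring.jacobson E := by
  rw [← Ideal.jacobson_bot, Ideal.mem_jacobson_iff]
  intro y
  have hn : IsNilpotent (y * x) := by
    rcases hE (y * x) with h | h
    · exact h
    · exfalso
      obtain ⟨n, hn⟩ := hx
      have : ∀ m, x ^ m = 0 → False := by
        intro m
        induction m with
        | zero => simp [Submodule.pow_zero]
        | succ m ih =>
          intro hm
          apply ih
          rw [← h.mul_right_eq_zero, mul_assoc, ← pow_succ', hm, mul_zero]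
      exact this n hn
  obtain ⟨v, hv⟩ := hn.isUnit_add_one
  refine ⟨(↑v⁻¹ : E), ?_⟩
  have : (↑v⁻¹ : E) * (y * x + 1) = 1 := by rw [← hv]; simp
  rw [mul_add, mul_one, ← mul_assoc] at this
  rw [this]; simp

/-- coefficientwise application of a linear map -/
theorem aux_functional {K L : Type} [Field K] [Field L] [Algebra K L] (α : ℕ) (g : L →ₗ[K] K) :
    ∃ G : Oalpha L α →+ Oalpha K α,
      (∀ c y, G (truncBaseChange K L (algebraMap K L) α c * y) = c * G y) ∧
      (∀ n (l : L), G (Ideal.Quotient.mk _ (Polynomial.monomial n l))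
        = Ideal.Quotient.mk _ (Polynomial.monomial n (g l))) := by
  let G₀ : Polynomial L →+ Polynomial K :=
    { toFun := fun p => ⟨.ofCoeff (Finsupp.mapRange g (map_zero g) p.toFinsupp.coeff)⟩
      map_zero' := by ext; simp
      map_add' := by intros; ext; simp }
  have hG₀ : ∀ p n, (G₀ p).coeff n = g (p.coeff n) := fun p n => rfl
  have hker : ∀ p ∈ Ideal.span {(Polynomial.X : Polynomial L) ^ α},
      ((Ideal.Quotient.mk (Ideal.span {(Polynomial.X : Polynomial K) ^ α})
        : Polynomial K →+ Oalpha K α).comp G₀) p = 0 := by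
    intro p hp
    rw [Ideal.mem_span_singleton, Polynomial.X_pow_dvd_iff] at hp
    change Ideal.Quotient.mk (Ideal.span {(Polynomial.X : Polynomial K) ^ α}) (G₀ p) = 0
    rw [Ideal.Quotient.eq_zero_iff_mem, Ideal.mem_span_singleton, Polynomial.X_pow_dvd_iff]
    intro d hd
    rw [hG₀, hp d hd, map_zero]
  let G : Oalpha L α →+ Oalpha K α := QuotientAddGroup.lift
    (Ideal.span {(Polynomial.X : Polynomial L) ^ α}).toAddSubgroup _ hker
  have hG : ∀ p, G (Ideal.Quotient.mk _ p) = Ideal.Quotient.mk _ (G₀ p) := fun p => rfl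
  refine ⟨G, ?_, ?_⟩
  · intro c y
    obtain ⟨c, rfl⟩ := Ideal.Quotient.mk_surjective c
    obtain ⟨y, rfl⟩ := Ideal.Quotient.mk_surjective y
    have : truncBaseChange K L (algebraMap K L) α (Ideal.Quotient.mk _ c)
      = Ideal.Quotient.mk _ (c.map (algebraMap K L)) := rfl
    rw [this, ← map_mul, hG, hG, ← map_mul]
    congr 1
    ext n
    rw [hG₀, Polynomial.coeff_mul, Polynomial.coeff_mul, map_sum]
    refine Finset.sum_congr rfl fun a _ => ?_
    rw [Polynomial.coeff_map, hG₀, ← Algebra.smul_def, map_smul, smul_eq_mul]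
  · intro n l
    rw [hG]
    congr 1
    ext m
    rw [hG₀, Polynomial.coeff_monomial, Polynomial.coeff_monomial]
    split_ifs <;> simp

theorem aux_expand {K L : Type} [Field K] [Field L] [Algebra K L] (α : ℕ) :
    ∃ (J : Type) (b : J → L) (G : J → Oalpha L α →+ Oalpha K α),
      (∀ j c y, G j (truncBaseChange K L (algebraMap K L) α c * y) = c * G j y) ∧
      (∀ y, ∀ᶠ T : Finset J in Filter.atTop,
        y = ∑ j ∈ T, b j • truncBaseChange K L (algebraMap K L) α (G j y)) := by
  let b := Module.Basis.ofVectorSpace K L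
  choose G hG1 hG2 using fun j => aux_functional (K := K) (L := L) α (b.coord j)
  refine ⟨_, b, G, hG1, ?_⟩
  intro y
  obtain ⟨y, rfl⟩ := Ideal.Quotient.mk_surjective y
  induction y using Polynomial.induction_on' with
  | add p q hp hq =>
    filter_upwards [hp, hq] with T h1 h2
    simp only [map_add, smul_add, Finset.sum_add_distrib]
    rw [← h1, ← h2]
  | monomial n l =>
    filter_upwards [Filter.eventually_ge_atTop (b.repr l).support] with T hT
    simp only [hG2]
    have h1 : ∀ c : K, truncBaseChange K L (algebraMap K L) α
        (Ideal.Quotient.mk _ (Polynomial.monomial n c)) =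
        Ideal.Quotient.mk _ (Polynomial.monomial n (algebraMap K L c)) := by
      intro c
      have : truncBaseChange K L (algebraMap K L) α
        (Ideal.Quotient.mk _ (Polynomial.monomial n c)) = Ideal.Quotient.mk _
          ((Polynomial.monomial n c).map (algebraMap K L)) := rfl
      rw [this, Polynomial.map_monomial]
    have h2 : ∀ (d : L) (p : Polynomial L), d • (Ideal.Quotient.mk
        (Ideal.span {(Polynomial.X : Polynomial L) ^ α}) p) = Ideal.Quotient.mk _ (d • p) :=
      fun d p => rfl
    simp only [h1, h2, Polynomial.smul_monomial]
    rw [← map_sum, ← map_sum]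
    congr 2
    conv_lhs => rw [← b.linearCombination_repr l, Finsupp.linearCombination_apply,
      Finsupp.sum_of_support_subset _ hT _ (by simp)]
    refine Finset.sum_congr rfl fun j _ => ?_
    rw [Algebra.smul_def, smul_eq_mul, mul_comm]; rfl

/-- The endomorphism algebra. -/
def endAlg (K : Type) [Field K] (α : ℕ) (Q : Quiv) (r : Q.V → ℕ)
    (x : ∀ a : Q.A, Matrix (Fin (r (Q.t a))) (Fin (r (Q.s a))) (Oalpha K α)) :
    Subalgebra K (∀ i : Q.V, Matrix (Fin (r i)) (Fin (r i)) (Oalpha K α)) where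
  carrier := {φ | ∀ a : Q.A, φ (Q.t a) * x a = x a * φ (Q.s a)}
  mul_mem' := by
    intro f g hf hg a
    rw [Pi.mul_apply, Pi.mul_apply, Matrix.mul_assoc, hg a, ← Matrix.mul_assoc, hf a,
      Matrix.mul_assoc]
  add_mem' := by
    intro f g hf hg a
    rw [Pi.add_apply, Pi.add_apply, Matrix.add_mul, Matrix.mul_add, hf a, hg a]
  algebraMap_mem' := by
    intro c a
    rw [Pi.algebraMap_apply, Pi.algebraMap_apply, Algebra.algebraMap_eq_smul_one,
      Algebra.algebraMap_eq_smul_one, Matrix.smul_mul, Matrix.mul_smul, Matrix.one_mul,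
      Matrix.mul_one]

theorem aux_eval (K : Type) [Field K] (α : ℕ) (hα : 1 ≤ α) : Nonempty (Oalpha K α →ₐ[K] K) := by
  refine ⟨Ideal.Quotient.liftₐ _ (Polynomial.aeval (0 : K)) ?_⟩
  intro p hp
  rw [Ideal.mem_span_singleton] at hp
  obtain ⟨w, rfl⟩ := hp
  rw [map_mul, map_pow, Polynomial.aeval_X, zero_pow (by omega), zero_mul]

theorem aux_exE (K : Type) [Field K] (α : ℕ) (Q : Quiv) (r : Q.V → ℕ)
    (x : ∀ a : Q.A, Matrix (Fin (r (Q.t a))) (Fin (r (Q.s a))) (Oalpha K α)) :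
    ∃ (E : Type) (_ : Ring E) (_ : Algebra K E)
      (v : E →ₐ[K] (∀ i : Q.V, Matrix (Fin (r i)) (Fin (r i)) (Oalpha K α))),
      Function.Injective v ∧
      ∀ φ, (∃ e, v e = φ) ↔ ∀ a : Q.A, φ (Q.t a) * x a = x a * φ (Q.s a) :=
  ⟨endAlg K α Q r x, Subalgebra.toRing _, Subalgebra.algebra _, (endAlg K α Q r x).val,
    Subtype.val_injective, fun φ => ⟨fun ⟨e, he⟩ => he ▸ e.2, fun h => ⟨⟨φ, h⟩, rfl⟩⟩⟩

theorem aux_scalar_add_nilp (K : Type) [Field K]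
    (α : ℕ) (hα : 1 ≤ α) (Q : Quiv) [Fintype Q.V]
    (r : Q.V → ℕ) (hgcd : Finset.univ.gcd r = 1)
    (x : ∀ a : Q.A, Matrix (Fin (r (Q.t a))) (Fin (r (Q.s a))) (Oalpha K α))
    {E : Type} [Ring E] [Algebra K E] [Module.Finite K E] [Nontrivial E]
    (v : E →ₐ[K] (∀ i : Q.V, Matrix (Fin (r i)) (Fin (r i)) (Oalpha K α)))
    (hv : Function.Injective v)
    (hv' : ∀ φ, (∃ e, v e = φ) ↔ ∀ a : Q.A, φ (Q.t a) * x a = x a * φ (Q.s a))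
    (hx : IsIndecomposable Q r (Oalpha K α) x) (u : E) :
    ∃ c : K, IsNilpotent (u - algebraMap K _ c) := by
  have hE : ∀ e : E, e * e = e → e = 0 ∨ e = 1 := by
    intro e he
    rcases hx.2 (v e) ((hv' _).1 ⟨e, rfl⟩)
      (fun i => by rw [← Pi.mul_apply, ← map_mul, he]) with h | h
    · exact Or.inl (hv ((funext h).trans (map_zero v).symm))
    · exact Or.inr (hv ((funext h).trans (map_one v).symm))
  obtain ⟨P, k, hP, hk⟩ := aux_pow_irred (K := K) hE u
  obtain ⟨ε⟩ := aux_eval K α hα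
  have hdeg : ∀ i, P.natDegree ∣ r i := by
    intro i
    let F : E →ₐ[K] Matrix (Fin (r i)) (Fin (r i)) K :=
      (ε.mapMatrix).comp ((Pi.evalAlgHom K _ i).comp v)
    refine aux_deg (F u) P k hP ?_
    rw [Polynomial.aeval_algHom_apply, hk, map_zero]
  have h1 : P.natDegree = 1 := by
    have := Finset.dvd_gcd (s := Finset.univ) (f := r) (fun i _ => hdeg i)
    rw [hgcd] at this
    exact Nat.dvd_one.1 this
  obtain ⟨c, hc⟩ := Polynomial.exists_root_of_degree_eq_one
    (Polynomial.degree_eq_iff_natDegree_eq hP.ne_zero |>.2 h1)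
  have hd := Polynomial.dvd_iff_isRoot.2 hc
  refine ⟨c, k, ?_⟩
  obtain ⟨w, hw⟩ := pow_dvd_pow_of_dvd (hP.dvd_symm (Polynomial.irreducible_X_sub_C c) |> fun h =>
    (Polynomial.irreducible_X_sub_C c).dvd_symm hP hd) k
  have := congrArg (Polynomial.aeval u) hw
  rw [map_mul, hk, zero_mul] at this
  simpa using this

theorem aux_finite (K : Type) [Field K] [Fintype K] (α : ℕ) : Finite (Oalpha K α) := by
  have : Module.Finite K (Oalpha K α) := (Polynomial.monic_X_pow α).finite_quotient
  exact Module.finite_of_finite K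

theorem aux_final {L S : Type*} [Field L] [Ring S] [Algebra L S] (φ N : S) (c : L)
    (h : φ = algebraMap L S c + N) (hN : IsNilpotent N) (hid : φ * φ = φ) : φ = 0 ∨ φ = 1 := by
  by_cases hc : c = 0
  · left
    rw [hc, map_zero, zero_add] at h
    obtain ⟨n, hn⟩ := hN
    have := IsIdempotentElem.pow_succ_eq n (show IsIdempotentElem φ from hid)
    rw [← this, pow_succ, h, hn, zero_mul]
  · right
    have hu : IsUnit φ := by
      rw [h]
      exact hN.isUnit_add_left_of_commute ((IsUnit.mk0 c hc).map (algebraMap L S))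
        (Algebra.commutes c N).symm
    exact hu.mul_left_cancel (by rw [hid, mul_one])

open scoped Pointwise in
theorem aux_span_nilp {E L S : Type*} [Ring E] [IsArtinianRing E] [Field L] [Ring S] [Algebra L S]
    (f : E →+* S) (N : S) (hN : N ∈ Submodule.span L (f '' (Ring.jacobson E : Set E))) :
    IsNilpotent N := by
  obtain ⟨n, hn⟩ := IsSemiprimaryRing.isNilpotent (R := E)
  refine ⟨n, ?_⟩
  have h1 := Submodule.pow_mem_pow _ hN n
  rw [Submodule.span_pow, ← Set.image_pow] at h1
  have h2 : ∀ m, (Ring.jacobson E : Set E) ^ m ⊆ ((Ring.jacobson E) ^ m : Ideal E) := by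
    intro m
    induction m with
    | zero => simp [Submodule.pow_zero]
    | succ m ih =>
      rw [pow_succ, Submodule.pow_succ]
      rintro _ ⟨a, ha, b, hb, rfl⟩
      exact Ideal.mul_mem_mul (ih ha) hb
  have h3 : Submodule.span L (f '' ((Ring.jacobson E : Set E) ^ n)) ≤ ⊥ := by
    rw [Submodule.span_le]
    rintro _ ⟨a, ha, rfl⟩
    have := h2 n ha
    rw [hn] at this
    have h0 : a = 0 := by simpa using this
    simp [h0]
  simpa using h3 h1

theorem aux_main (K L : Type) [Field K] [Field L] [Algebra K L]
    [Fintype K] (α : ℕ) (hα : 1 ≤ α) (Q : Quiv) [Fintype Q.V]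
    (r : Q.V → ℕ) (hgcd : Finset.univ.gcd r = 1)
    (x : ∀ a : Q.A, Matrix (Fin (r (Q.t a))) (Fin (r (Q.s a))) (Oalpha K α))
    (hx : IsIndecomposable Q r (Oalpha K α) x) :
    IsIndecomposable Q r (Oalpha L α)
      (fun a => (x a).map (truncBaseChange K L (algebraMap K L) α)) := by
  classical
  refine ⟨hx.1, ?_⟩
  intro φ hφ hid
  have := aux_finite K α
  obtain ⟨E, _, _, v, hv, hv'⟩ := aux_exE K α Q r x
  have : Finite E := Finite.of_injective v hv
  have : Module.Finite K E := Module.Finite.of_finite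
  have : Nontrivial (Oalpha K α) := (aux_eval K α hα).some.toRingHom.domain_nontrivial
  have : Nontrivial E := by
    obtain ⟨i, hi⟩ := hx.1
    refine ⟨0, 1, fun h => ?_⟩
    have h1 := congrFun (congrArg v h) i
    rw [map_zero, map_one] at h1
    have h2 := congrFun (congrFun h1 ⟨0, by omega⟩) ⟨0, by omega⟩
    simp at h2
  have hdec := aux_scalar_add_nilp K α hα Q r hgcd x v hv hv' hx
  have hloc : ∀ u : E, IsNilpotent u ∨ IsUnit u := by
    intro u
    obtain ⟨c, hc⟩ := hdec u
    by_cases h0 : c = 0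
    · left; simpa [h0] using hc
    · right
      have := hc.isUnit_add_left_of_commute
        ((IsUnit.mk0 c h0).map (algebraMap K E)) (Algebra.commutes c _).symm
      simpa using this
  obtain ⟨J, b, G, hG1, hG2⟩ := aux_expand (K := K) (L := L) α
  let ι := truncBaseChange K L (algebraMap K L) α
  let f : E →+* (∀ i : Q.V, Matrix (Fin (r i)) (Fin (r i)) (Oalpha L α)) :=
    (RingHom.pi fun i => (ι.mapMatrix).comp (Pi.evalRingHom _ i)).comp
      v.toRingHom
  have hcomp : ∀ j, ∃ e, v e = (fun i => (φ i).map (G j)) := by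
    intro j
    rw [hv']
    intro a
    have h := hφ a
    ext p q
    have h' := congrArg (G j) (congrFun (congrFun h p) q)
    simp only [Matrix.mul_apply, map_sum, Matrix.map_apply, hG1] at h'
    simp only [Matrix.mul_apply, Matrix.map_apply]
    rw [← h']
    refine Finset.sum_congr rfl fun s _ => ?_
    rw [mul_comm (φ _ _ _), hG1, mul_comm]
  choose ψ hψ using hcomp
  choose c hc using fun j => hdec (ψ j)
  obtain ⟨T, hT⟩ : ∃ T : Finset J, φ = ∑ j ∈ T, b j • f (ψ j) := by
    have : ∀ᶠ T : Finset J in Filter.atTop, ∀ i p q,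
        φ i p q = ∑ j ∈ T, b j • ι (G j (φ i p q)) := by
      simp only [Filter.eventually_all]
      exact fun i p q => hG2 _
    obtain ⟨T, hT⟩ := this.exists
    refine ⟨T, ?_⟩
    funext i
    ext p q
    rw [hT i p q, Finset.sum_apply, Matrix.sum_apply]
    refine Finset.sum_congr rfl fun j _ => ?_
    have : (v (ψ j) i) p q = G j (φ i p q) := by rw [hψ]; rfl
    rw [← this]
    rfl
  have hfc : ∀ k : K, f (algebraMap K _ k) = algebraMap L _ (algebraMap K L k) := by
    intro k
    funext i
    ext p q
    have hvk : v (algebraMap K E k) i = algebraMap K _ k := by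
      rw [v.commutes]; rfl
    change ι (v (algebraMap K E k) i p q) = _
    rw [hvk]
    change ι ((algebraMap K (Matrix (Fin (r i)) (Fin (r i)) (Oalpha K α)) k) p q) =
      (algebraMap L (Matrix (Fin (r i)) (Fin (r i)) (Oalpha L α)) (algebraMap K L k)) p q
    rw [Matrix.algebraMap_matrix_apply, Matrix.algebraMap_matrix_apply]
    split_ifs
    · change Ideal.Quotient.mk _ ((Polynomial.C k).map (algebraMap K L)) = _
      rw [Polynomial.map_C]
      rfl
    · exact map_zero _
  have hkey := aux_final φ (∑ j ∈ T, b j • f (ψ j - algebraMap K _ (c j)))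
    (∑ j ∈ T, b j * algebraMap K L (c j)) (by
      rw [map_sum, ← Finset.sum_add_distrib, hT]
      refine Finset.sum_congr rfl fun j _ => ?_
      rw [map_sub, hfc, smul_sub, map_mul, ← Algebra.smul_def, add_sub_cancel])
    (aux_span_nilp (L := L) f _ (Submodule.sum_mem _ fun j _ => Submodule.smul_mem _ _
      (Submodule.subset_span ⟨_, aux_nilp_mem hloc _ (hc j), rfl⟩)))
    (funext hid)
  rcases hkey with h | h
  · exact Or.inl fun i => congrFun h i
  · exact Or.inr fun i => congrFun h i


/-- Let `r` be an indivisible rank vector (the gcd of its entries is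
`1`) and `M` an indecomposable locally free representation (given by `x`) of `Q` over
`F_q[t]/(t^α)` of rank vector `r`.  Then `M` is absolutely indecomposable. -/
theorem absolutely_indecomposable_of_indecomposable_indivisible (K : Type) [Field K]
    [Fintype K] (α : ℕ) (hα : 1 ≤ α) (Q : Quiv) [Fintype Q.V] [Fintype Q.A]
    [DecidableEq Q.V] (r : Q.V → ℕ) (hgcd : Finset.univ.gcd r = 1)
    (x : ∀ a : Q.A, Matrix (Fin (r (Q.t a))) (Fin (r (Q.s a))) (Oalpha K α))
    (hx : IsIndecomposable Q r (Oalpha K α) x) :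
    IsAbsolutelyIndecomposable K α Q r x := by
  exact aux_main K (AlgebraicClosure K) α hα Q r hgcd x hx
end

section
/- Let Q be a connected graph, and for a spanning tree T of Q with edge labeling v : T → {0, …, α−1}, and for each non-tree edge a let T_a be the edge set of the unique path in T joining the endpoints of a, v_{T_a} := max over T_a of v, and e_{T_a} the ≤-smallest edge of T_a achieving this max (with respect to a fixed total order on Q_1). Define n_T := Σ_{a ∉ T} (α − v_{T_a} − [a > e_{T_a}]). Then Σ_T q^{n_T}, summed over all pairs (T, v) of spanning trees with labelings v : T → {0,…,α−1}, equals A_{Q,1,α}(q) := Σ over chains E_1 ⊆ … ⊆ E_α ⊆ Q_1 with Q|_{E_α} connected of (q−1)^{b(Q|_{E_α})} q^{Σ_{k<α} b(Q|_{E_k})}. -/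
/-- A multigraph: finite sets of vertices and edges, loops and parallel edges allowed.
Each edge has two (not necessarily distinct) endpoints `s e`, `t e`. -/
structure Multigraph where
  V : Type
  E : Type
  s : E → V
  t : E → V

namespace Multigraph

variable (G : Multigraph)

/-- Two vertices are adjacent if some edge joins them (in either direction). -/
def Adj (x y : G.V) : Prop :=
  ∃ e : G.E, (G.s e = x ∧ G.t e = y) ∨ (G.s e = y ∧ G.t e = x)

/-- A graph is connected if it has a vertex and any two vertices are joined by a walk,
i.e. related under the equivalence relation generated by adjacency. -/
def Connected : Prop :=
  Nonempty G.V ∧ ∀ x y : G.V, Relation.EqvGen G.Adj x y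

/-- The number `C` of connected components: the cardinality of the set of equivalence
classes of vertices under the equivalence relation generated by adjacency. -/
noncomputable def numComponents : ℕ :=
  Nat.card (Quotient (Relation.EqvGen.setoid G.Adj))

/-- The (first) Betti number `b(G) = C - V + E`. -/
noncomputable def betti : ℤ :=
  (G.numComponents : ℤ) - (Nat.card G.V : ℤ) + (Nat.card G.E : ℤ)


/-- The Betti number as a natural number, `b(G) = (C + E) - V` (equal to
`C - V + E`, which is non-negative for any graph). -/
noncomputable def bettiNat : ℕ :=
  (G.numComponents + Nat.card G.E) - Nat.card G.V

/-- The spanning subgraph of `G` with all vertices and edge set `E' ⊆ G.E`. -/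
def restrictE (E' : Finset G.E) : Multigraph where
  V := G.V
  E := {e : G.E // e ∈ E'}
  s := fun e => G.s e.1
  t := fun e => G.t e.1

variable [Fintype G.V] [Fintype G.E] [LinearOrder G.E]

/-- A spanning tree of `G`: an edge subset of cardinality `#V − 1` whose spanning
subgraph is connected. -/
def IsSpanningTree (T : Finset G.E) : Prop :=
  T.card + 1 = Nat.card G.V ∧ (G.restrictE T).Connected

/-- For a spanning tree `T` and an edge `a ∉ T`, the edge set `T_a` of the unique
path in `T` joining the endpoints of `a`: a tree edge `e` lies on this path exactly
when exchanging `e` for `a` again yields a connected spanning subgraph. -/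
def fundPath (T : Finset G.E) (a : G.E) : Set G.E :=
  {e : G.E | e ∈ T ∧ (G.restrictE ((T.erase e) ∪ {a})).Connected}

/-- `v_{T_a}`: the largest label occurring on the path `T_a`, for a labeling
`v : T → {0, …, α−1}` (it is `0` when `T_a` is empty, e.g. when `a` is a loop). -/
noncomputable def vmaxPath {α : ℕ} (T : Finset G.E) (v : {e : G.E // e ∈ T} → Fin α)
    (a : G.E) : ℕ :=
  sSup {n : ℕ | ∃ e : {e : G.E // e ∈ T}, e.1 ∈ G.fundPath T a ∧ (v e).1 = n}

open Classical in
/-- The indicator `[a > e_{T_a}]`, where `e_{T_a}` is the smallest edge of `T_a`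
(in the fixed total order on edges) whose label achieves the maximum `v_{T_a}`
(the indicator is `0` when `T_a` is empty). -/
noncomputable def deltaInd {α : ℕ} (T : Finset G.E) (v : {e : G.E // e ∈ T} → Fin α)
    (a : G.E) : ℕ :=
  if ∃ e : {e : G.E // e ∈ T}, e.1 ∈ G.fundPath T a ∧ (v e).1 = G.vmaxPath T v a ∧
      e.1 < a ∧ ∀ e' : {e : G.E // e ∈ T},
        e'.1 ∈ G.fundPath T a → (v e').1 = G.vmaxPath T v a → e.1 ≤ e'.1
  then 1 else 0

/-- The exponent `n_T = Σ_{a ∉ T} (α − v_{T_a} − [a > e_{T_a}])` attached to a valued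
spanning tree `(T, v)`. -/
noncomputable def nT {α : ℕ} (T : Finset G.E) (v : {e : G.E // e ∈ T} → Fin α) : ℕ :=
  ∑ a ∈ Tᶜ, (α - G.vmaxPath T v a - G.deltaInd T v a)

end Multigraph

open Polynomial

namespace Multigraph

set_option linter.unusedSectionVars false

section conn
variable {G : Multigraph}

/-- Connectedness of two vertices inside the spanning subgraph with edge set `S`. -/
def conn (S : Finset G.E) (x y : G.V) : Prop :=
  Relation.EqvGen (G.restrictE S).Adj x y

theorem conn_refl (S : Finset G.E) (x : G.V) : conn S x x := Relation.EqvGen.refl _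
theorem conn_symm {S : Finset G.E} {x y : G.V} (h : conn S x y) : conn S y x :=
  Relation.EqvGen.symm _ _ h
theorem conn_trans {S : Finset G.E} {x y z : G.V} (h : conn S x y) (h' : conn S y z) :
    conn S x z := Relation.EqvGen.trans _ _ _ h h'

theorem conn_edge {S : Finset G.E} {e : G.E} (he : e ∈ S) : conn S (G.s e) (G.t e) :=
  Relation.EqvGen.rel _ _ ⟨⟨e, he⟩, Or.inl ⟨rfl, rfl⟩⟩

theorem conn_rec {S : Finset G.E} (R : G.V → G.V → Prop) (hr : ∀ x, R x x)
    (hs : ∀ x y, R x y → R y x) (ht : ∀ x y z, R x y → R y z → R x z)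
    (he : ∀ e ∈ S, R (G.s e) (G.t e)) {x y : G.V} (h : conn S x y) : R x y := by
  unfold conn at h
  induction h with
  | rel x y h =>
    obtain ⟨e, ⟨h1, h2⟩ | ⟨h1, h2⟩⟩ := h
    · subst h1 h2; exact he e.1 e.2
    · subst h1 h2; exact hs _ _ (he e.1 e.2)
  | refl x => exact hr x
  | symm x y _ ih => exact hs _ _ ih
  | trans x y z _ _ ih1 ih2 => exact ht _ _ _ ih1 ih2

theorem conn_le {S S' : Finset G.E} (h : ∀ e ∈ S, conn S' (G.s e) (G.t e)) {x y : G.V}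
    (hxy : conn S x y) : conn S' x y :=
  conn_rec (conn S') (conn_refl S') (fun _ _ => conn_symm) (fun _ _ _ => conn_trans) h hxy

theorem conn_mono {S S' : Finset G.E} (h : S ⊆ S') {x y : G.V}
    (hxy : conn S x y) : conn S' x y :=
  conn_le (fun _ he => conn_edge (h he)) hxy

theorem conn_insert [DecidableEq G.E] {S : Finset G.E} {e : G.E} {x y : G.V}
    (h : conn (insert e S) x y) : conn S x y ∨ (conn S x (G.s e) ∧ conn S (G.t e) y) ∨
      (conn S x (G.t e) ∧ conn S (G.s e) y) := by
  refine conn_rec (fun x y => conn S x y ∨ (conn S x (G.s e) ∧ conn S (G.t e) y) ∨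
      (conn S x (G.t e) ∧ conn S (G.s e) y)) ?_ ?_ ?_ ?_ h
  · intro x; exact Or.inl (conn_refl _ _)
  · rintro x y (h | ⟨h, h'⟩ | ⟨h, h'⟩)
    · exact Or.inl (conn_symm h)
    · exact Or.inr (Or.inr ⟨conn_symm h', conn_symm h⟩)
    · exact Or.inr (Or.inl ⟨conn_symm h', conn_symm h⟩)
  · rintro x y z (h | ⟨h, h'⟩ | ⟨h, h'⟩) (k | ⟨k, k'⟩ | ⟨k, k'⟩)
    · exact Or.inl (conn_trans h k)
    · exact Or.inr (Or.inl ⟨conn_trans h k, k'⟩)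
    · exact Or.inr (Or.inr ⟨conn_trans h k, k'⟩)
    · exact Or.inr (Or.inl ⟨h, conn_trans h' k⟩)
    · exact Or.inr (Or.inl ⟨h, k'⟩)
    · exact Or.inl (conn_trans h k')
    · exact Or.inr (Or.inr ⟨h, conn_trans h' k⟩)
    · exact Or.inl (conn_trans h k')
    · exact Or.inr (Or.inr ⟨h, k'⟩)
  · intro f hf
    rcases Finset.mem_insert.1 hf with rfl | hf
    · exact Or.inr (Or.inl ⟨conn_refl _ _, conn_refl _ _⟩)
    · exact Or.inl (conn_edge hf)

/-- The setoid of connectedness. -/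
def cs (S : Finset G.E) : Setoid G.V := Relation.EqvGen.setoid (G.restrictE S).Adj

/-- number of components -/
noncomputable def nc (S : Finset G.E) : ℕ := Nat.card (Quotient (cs S))

theorem cs_eq {S : Finset G.E} {x y : G.V} :
    (Quotient.mk (cs S) x = Quotient.mk (cs S) y) ↔ conn S x y := by
  rw [Quotient.eq]; rfl

theorem nc_congr {S S' : Finset G.E} (h : ∀ x y, conn S x y ↔ conn S' x y) : nc S = nc S' := by
  have : cs S = cs S' := Setoid.ext h
  rw [nc, nc, this]

theorem nc_empty : nc (∅ : Finset G.E) = Nat.card G.V := by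
  have h : Function.Bijective (Quotient.mk (cs (∅ : Finset G.E))) := by
    refine ⟨fun x y hxy => ?_, Quotient.mk_surjective⟩
    rw [cs_eq] at hxy
    exact conn_rec (fun x y => x = y) (fun _ => rfl) (fun _ _ h => h.symm)
      (fun _ _ _ h h' => h.trans h') (fun e he => by simp at he) hxy
  exact (Nat.card_eq_of_bijective _ h).symm

theorem connected_iff {S : Finset G.E} :
    (G.restrictE S).Connected ↔ Nonempty G.V ∧ ∀ x y : G.V, conn S x y := Iff.rfl

theorem nc_connected {S : Finset G.E} (h : (G.restrictE S).Connected) : nc S = 1 := by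
  obtain ⟨⟨x⟩, h⟩ := connected_iff.1 h
  rw [nc, Nat.card_eq_one_iff_unique]
  refine ⟨⟨fun a b => ?_⟩, ⟨Quotient.mk _ x⟩⟩
  induction a using Quotient.ind
  induction b using Quotient.ind
  exact cs_eq.2 (h _ _)

theorem connected_of_nc [Finite G.V] {S : Finset G.E} (h0 : Nonempty G.V) (h : nc S ≤ 1) :
    (G.restrictE S).Connected := by
  refine connected_iff.2 ⟨h0, fun x y => ?_⟩
  have := Finite.card_le_one_iff_subsingleton.1 h
  exact cs_eq.1 (Subsingleton.elim _ _)

variable [Fintype G.V]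

theorem nc_le_insert [DecidableEq G.E] (S : Finset G.E) (e : G.E) :
    nc S ≤ nc (insert e S) + 1 := by
  classical
  let π : Quotient (cs S) → Quotient (cs (insert e S)) :=
    Quotient.lift (fun x => Quotient.mk _ x)
      (fun x y h => cs_eq.2 (conn_mono (Finset.subset_insert e S) h))
  let φ : Quotient (cs S) → Option (Quotient (cs (insert e S))) := fun q =>
    if q = Quotient.mk _ (G.t e) then none else some (π q)
  have hφ : Function.Injective φ := by
    intro a b
    induction a using Quotient.ind with | _ x
    induction b using Quotient.ind with | _ y
    simp only [φ, π, cs_eq]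
    split_ifs with h1 h2 h2
    · intro _; exact conn_trans h1 (conn_symm h2)
    · intro h; cases h
    · intro h; cases h
    · intro h
      simp only [Option.some.injEq, Quotient.lift_mk, cs_eq] at h
      rcases conn_insert h with h | ⟨h, h'⟩ | ⟨h, h'⟩
      · exact h
      · exact absurd (conn_symm h') h2
      · exact absurd h h1
  have := Nat.card_le_card_of_injective φ hφ
  rwa [Finite.card_option] at this

theorem nc_insert_lt [DecidableEq G.E] {S : Finset G.E} {e : G.E}
    (h : ¬ conn S (G.s e) (G.t e)) : nc (insert e S) + 1 ≤ nc S := by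
  let π : Quotient (cs S) → Quotient (cs (insert e S)) :=
    Quotient.lift (fun x => Quotient.mk _ x)
      (fun x y h => cs_eq.2 (conn_mono (Finset.subset_insert e S) h))
  have hs : Function.Surjective π := by
    intro b
    induction b using Quotient.ind with | _ y
    exact ⟨Quotient.mk _ y, rfl⟩
  by_contra hlt
  have hle : nc S ≤ nc (insert e S) := by omega
  have hb : Function.Bijective π :=
    (Nat.bijective_iff_surjective_and_card π).2
      ⟨hs, le_antisymm hle (Nat.card_le_card_of_surjective π hs)⟩
  apply h
  rw [← cs_eq]
  apply hb.1
  exact cs_eq.2 (conn_edge (Finset.mem_insert_self e S))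

theorem nc_le_union [DecidableEq G.E] (S U : Finset G.E) : nc S ≤ nc (S ∪ U) + U.card := by
  induction U using Finset.induction_on with
  | empty => simp
  | insert a U ha ih =>
    rw [Finset.card_insert_of_notMem ha, Finset.union_insert]
    have := nc_le_insert (S ∪ U) a
    omega

theorem card_le_nc [DecidableEq G.E] (S : Finset G.E) : Nat.card G.V ≤ nc S + S.card := by
  have := nc_le_union ∅ S
  rwa [nc_empty, Finset.empty_union] at this

end conn

section tree
variable {G : Multigraph} [Fintype G.V] [Fintype G.E] [LinearOrder G.E]

theorem nc_sub_tree {T F : Finset G.E} (hT : G.IsSpanningTree T) (hF : F ⊆ T) :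
    nc F + F.card = Nat.card G.V := by
  have h1 := card_le_nc F
  have h2 := nc_le_union F (T \ F)
  rw [Finset.union_sdiff_of_subset hF, nc_connected hT.2] at h2
  have h3 := Finset.card_sdiff_add_card_eq_card hF
  have h4 := hT.1
  omega

theorem not_conn_erase {T : Finset G.E} (hT : G.IsSpanningTree T) {e : G.E} (he : e ∈ T) :
    ¬ conn (T.erase e) (G.s e) (G.t e) := by
  intro h
  have h1 : nc (T.erase e) = nc T := by
    apply nc_congr
    intro x y
    refine ⟨conn_mono (Finset.erase_subset e T), conn_le ?_⟩
    intro f hf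
    by_cases hfe : f = e
    · subst hfe; exact h
    · exact conn_edge (Finset.mem_erase.2 ⟨hfe, hf⟩)
  have h2 := nc_sub_tree hT (Finset.erase_subset e T)
  have h3 := nc_sub_tree hT (Finset.Subset.refl T)
  have h4 := Finset.card_erase_add_one he
  omega

theorem mem_fundPath {T : Finset G.E} (hT : G.IsSpanningTree T) {e a : G.E} (he : e ∈ T)
    (ha : a ∉ T) : e ∈ G.fundPath T a ↔ ¬ conn (T.erase e) (G.s a) (G.t a) := by
  have hV : Nonempty G.V := hT.2.1
  have h2 := nc_sub_tree hT (Finset.erase_subset e T)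
  have h3 := nc_sub_tree hT (Finset.Subset.refl T)
  have h3' := nc_connected hT.2
  have h4 := Finset.card_erase_add_one he
  have hu : T.erase e ∪ {a} = insert a (T.erase e) := by
    ext x; simp
  simp only [fundPath, Set.mem_ofPred_eq, he, true_and, hu]
  constructor
  · intro hc h
    have h1 : nc (T.erase e) = nc (insert a (T.erase e)) := by
      apply nc_congr
      intro x y
      refine ⟨conn_mono (Finset.subset_insert _ _), conn_le ?_⟩
      intro f hf
      rcases Finset.mem_insert.1 hf with rfl | hf
      · exact h
      · exact conn_edge hf
    rw [nc_connected hc] at h1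
    omega
  · intro h
    have := nc_insert_lt h
    exact connected_of_nc hV (by omega)

theorem conn_sub_tree {T P : Finset G.E} (hT : G.IsSpanningTree T) (hP : P ⊆ T) {x y : G.V} :
    conn P x y ↔ ∀ e ∈ T, e ∉ P → conn (T.erase e) x y := by
  constructor
  · intro h e he heP
    refine conn_mono ?_ h
    intro f hf
    exact Finset.mem_erase.2 ⟨fun h => heP (h ▸ hf), hP hf⟩
  · intro h
    have key : ∀ U : Finset G.E, U ⊆ T → conn (P ∪ U) x y → conn P x y := by
      intro U
      induction U using Finset.induction_on with
      | empty => intro _ h; simpa using h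
      | insert e U heU ih =>
        intro hU hc
        have heT : e ∈ T := hU (Finset.mem_insert_self _ _)
        have hUT : U ⊆ T := fun f hf => hU (Finset.mem_insert_of_mem hf)
        apply ih hUT
        by_cases heP : e ∈ P
        · rwa [Finset.union_insert, Finset.insert_eq_of_mem (Finset.mem_union_left _ heP)] at hc
        · have hsub : P ∪ U ⊆ T.erase e := by
            intro f hf
            refine Finset.mem_erase.2 ⟨?_, Finset.union_subset hP hUT hf⟩
            rintro rfl
            rcases Finset.mem_union.1 hf with h | h
            · exact heP h
            · exact heU h
          have hxy := h e heT heP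
          rw [Finset.union_insert] at hc
          rcases conn_insert hc with hc | ⟨h1, h2⟩ | ⟨h1, h2⟩
          · exact hc
          · exfalso
            exact not_conn_erase hT heT (conn_trans (conn_symm (conn_mono hsub h1))
              (conn_trans hxy (conn_symm (conn_mono hsub h2))))
          · exfalso
            exact not_conn_erase hT heT (conn_trans (conn_mono hsub h2)
              (conn_trans (conn_symm hxy) (conn_mono hsub h1)))
    apply key T (Finset.Subset.refl T)
    rw [Finset.union_eq_right.2 hP]
    exact hT.2.2 x y

/-- the order on edges: by value, then reversed edge order -/
def klt (f : G.E → ℕ) (e a : G.E) : Prop := f e < f a ∨ (f e = f a ∧ a < e)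

/-- the linear order key -/
def key (f : G.E → ℕ) (e : G.E) : ℕ ×ₗ G.Eᵒᵈ := toLex (f e, OrderDual.toDual e)

theorem key_lt {f : G.E → ℕ} {e a : G.E} : key f e < key f a ↔ klt f e a := by
  simp [key, klt, Prod.Lex.toLex_lt_toLex]

theorem key_inj {f : G.E → ℕ} {e a : G.E} (h : key f e = key f a) : e = a := by
  have := congrArg (fun p => OrderDual.ofDual (ofLex p).2) h
  exact this

open Classical in
/-- edges strictly below `a` -/
noncomputable def below (f : G.E → ℕ) (a : G.E) : Finset G.E :=
  Finset.univ.filter (fun e => klt f e a)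

theorem mem_below {f : G.E → ℕ} {e a : G.E} : e ∈ below f a ↔ klt f e a := by
  simp [below]

/-- edges of value at most `k` -/
def lev (f : G.E → ℕ) (k : ℕ) : Finset G.E := Finset.univ.filter (fun e => f e < k)

theorem mem_lev {f : G.E → ℕ} {k : ℕ} {e : G.E} : e ∈ lev f k ↔ f e < k := by
  simp [lev]

/-- `T` is the minimal spanning tree for `f` -/
def Good (α : ℕ) (T : Finset G.E) (f : G.E → ℕ) : Prop :=
  G.IsSpanningTree T ∧ (∀ e ∈ T, f e < α) ∧
    ∀ a, a ∉ T → conn (T ∩ below f a) (G.s a) (G.t a)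

open Classical in
/-- The Kruskal tree. -/
noncomputable def kruskal (α : ℕ) (f : G.E → ℕ) : Finset G.E :=
  Finset.univ.filter (fun e => f e < α ∧ ¬ conn (below f e) (G.s e) (G.t e))

theorem mem_kruskal {α : ℕ} {f : G.E → ℕ} {e : G.E} :
    e ∈ kruskal α f ↔ f e < α ∧ ¬ conn (below f e) (G.s e) (G.t e) := by
  simp [kruskal]

theorem klt_trans {f : G.E → ℕ} {a b c : G.E} (h : klt f a b) (h' : klt f b c) : klt f a c := by
  rw [← key_lt] at *; exact h.trans h'

theorem Good.conn_down {α : ℕ} {T : Finset G.E} {f : G.E → ℕ} (h : Good α T f)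
    {D : Finset G.E} (hD : ∀ a ∈ D, ∀ b, klt f b a → b ∈ D) {x y : G.V} :
    conn (T ∩ D) x y ↔ conn D x y := by
  refine ⟨conn_mono Finset.inter_subset_right, conn_le ?_⟩
  intro a ha
  by_cases haT : a ∈ T
  · exact conn_edge (Finset.mem_inter.2 ⟨haT, ha⟩)
  · refine conn_mono ?_ (h.2.2 a haT)
    intro b hb
    rw [Finset.mem_inter, mem_below] at hb
    exact Finset.mem_inter.2 ⟨hb.1, hD a ha b hb.2⟩

theorem Good.eq_kruskal {α : ℕ} {T : Finset G.E} {f : G.E → ℕ} (h : Good α T f) :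
    kruskal α f = T := by
  ext e
  rw [mem_kruskal]
  constructor
  · rintro ⟨_, h2⟩
    by_contra he
    exact h2 (conn_mono Finset.inter_subset_right (h.2.2 e he))
  · intro he
    refine ⟨h.2.1 e he, fun hc => ?_⟩
    rw [← h.conn_down (fun a ha b hb => by
      rw [mem_below] at *; exact klt_trans hb ha)] at hc
    refine not_conn_erase h.1 he (conn_mono ?_ hc)
    intro b hb
    rw [Finset.mem_inter, mem_below] at hb
    refine Finset.mem_erase.2 ⟨?_, hb.1⟩
    rintro rfl
    have := hb.2
    rw [← key_lt] at this
    exact lt_irrefl _ this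

theorem Good.lev_connected {α : ℕ} {T : Finset G.E} {f : G.E → ℕ} (h : Good α T f) :
    (G.restrictE (lev f α)).Connected :=
  connected_iff.2 ⟨h.1.2.1, fun x y =>
    conn_mono (fun e he => mem_lev.2 (h.2.1 e he)) (h.1.2.2 x y)⟩

theorem kruskal_conn {α : ℕ} {f : G.E → ℕ} (n : ℕ) : ∀ a, (below f a).card = n → f a < α →
    a ∉ kruskal α f → conn (kruskal α f ∩ below f a) (G.s a) (G.t a) := by
  induction n using Nat.strong_induction_on with
  | _ n ih =>
    intro a hn ha haK
    rw [mem_kruskal] at haK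
    have hc : conn (below f a) (G.s a) (G.t a) := by
      by_contra hc; exact haK ⟨ha, hc⟩
    refine conn_le ?_ hc
    intro b hb
    have hba := mem_below.1 hb
    have hbα : f b < α := by
      rcases hba with h | h <;> omega
    have hsub : below f b ⊆ below f a := fun c hc =>
      mem_below.2 (klt_trans (mem_below.1 hc) hba)
    by_cases hbK : b ∈ kruskal α f
    · exact conn_edge (Finset.mem_inter.2 ⟨hbK, hb⟩)
    · refine conn_mono (Finset.inter_subset_inter_left hsub) (ih _ ?_ b rfl hbα hbK)
      rw [← hn]
      apply Finset.card_lt_card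
      refine ⟨hsub, fun h => ?_⟩
      have := mem_below.1 (h hb)
      rw [← key_lt] at this
      exact lt_irrefl _ this

theorem kruskal_good {α : ℕ} {f : G.E → ℕ} (hf : (G.restrictE (lev f α)).Connected) :
    Good α (kruskal α f) f := by
  have hcon : (G.restrictE (kruskal α f)).Connected := by
    refine connected_iff.2 ⟨hf.1, fun x y => conn_le ?_ (hf.2 x y)⟩
    intro a ha
    by_cases haK : a ∈ kruskal α f
    · exact conn_edge haK
    · exact conn_mono Finset.inter_subset_left (kruskal_conn _ a rfl (mem_lev.1 ha) haK)
  have hforest : ∀ S : Finset G.E, S ⊆ kruskal α f → nc S + S.card ≤ Nat.card G.V := by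
    intro S
    induction S using Finset.induction_on_max_value (key f) with
    | empty => intro _; simp [nc_empty]
    | insert a S haS hmax ih =>
      intro hS
      have h1 := ih (fun x hx => hS (Finset.mem_insert_of_mem hx))
      have ha := hS (Finset.mem_insert_self a S)
      rw [mem_kruskal] at ha
      have hn : ¬ conn S (G.s a) (G.t a) := by
        intro hc
        refine ha.2 (conn_mono ?_ hc)
        intro x hx
        rw [mem_below, ← key_lt]
        refine lt_of_le_of_ne (hmax x hx) (fun h => haS ?_)
        rw [← key_inj h]; exact hx
      have h2 := nc_insert_lt hn
      rw [Finset.card_insert_of_notMem haS]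
      omega
  have h1 := hforest _ (Finset.Subset.refl _)
  have h2 := card_le_nc (kruskal α f)
  rw [nc_connected hcon] at h1 h2
  refine ⟨⟨by omega, hcon⟩, fun e he => (mem_kruskal.1 he).1, ?_⟩
  intro a ha
  by_cases haα : f a < α
  · exact kruskal_conn _ a rfl haα ha
  · refine conn_mono ?_ (hcon.2 _ _)
    intro e he
    refine Finset.mem_inter.2 ⟨he, mem_below.2 (Or.inl ?_)⟩
    have := (mem_kruskal.1 he).1
    omega

theorem bettiNat_eq {T S : Finset G.E} (hT : G.IsSpanningTree T)
    (h : ∀ x y, conn (T ∩ S) x y ↔ conn S x y) :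
    (G.restrictE S).bettiNat = (Tᶜ ∩ S).card := by
  have h1 := nc_sub_tree hT (Finset.inter_subset_left : T ∩ S ⊆ T)
  rw [nc_congr h] at h1
  have h2 : (G.restrictE S).bettiNat = (nc S + S.card) - Nat.card G.V := by
    have : Nat.card {e : G.E // e ∈ S} = S.card := by simp
    rw [← this]; rfl
  have h3 : (Tᶜ ∩ S).card + (T ∩ S).card = S.card := by
    rw [← Finset.card_union_of_disjoint]
    · congr 1; ext x; simp; tauto
    · rw [Finset.disjoint_left]; intro x; simp; tauto
  omega

theorem Good.betti_lev {α : ℕ} {T : Finset G.E} {f : G.E → ℕ} (h : Good α T f) (k : ℕ) :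
    (G.restrictE (lev f k)).bettiNat = ∑ a ∈ Tᶜ, if f a < k then 1 else 0 := by
  rw [bettiNat_eq h.1 (fun x y => h.conn_down (fun a ha b hb => by
    rw [mem_lev] at *
    rcases hb with h | h <;> omega)), Finset.card_eq_sum_ones, Finset.sum_ite, Finset.sum_const_zero,
    add_zero]
  congr 1
  ext x; simp [mem_lev]

end tree

end Multigraph

namespace Multigraph

section weights
variable {G : Multigraph} [Fintype G.V] [Fintype G.E] [LinearOrder G.E]

/-- weight of a valuation -/
noncomputable def wt (α : ℕ) (f : G.E → ℕ) : Polynomial ℤ :=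
  ((X : Polynomial ℤ) - 1) ^ (G.restrictE (lev f α)).bettiNat *
    (X : Polynomial ℤ) ^ (∑ k ∈ Finset.range (α - 1), (G.restrictE (lev f (k + 1))).bettiNat)

/-- local weight -/
noncomputable def lw (α j : ℕ) : Polynomial ℤ :=
  ((X : Polynomial ℤ) - 1) ^ (if j < α then 1 else 0) * (X : Polynomial ℤ) ^ (α - 1 - j)

theorem lw_sum {α m : ℕ} (hm : m ≤ α) : ∑ j ∈ Finset.Icc m α, lw α j = X ^ (α - m) := by
  induction hm using Nat.decreasingInduction with
  | self => simp [lw]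
  | of_succ m hm ih =>
    rw [← Finset.insert_Icc_add_one_left_eq_Icc hm.le, Finset.sum_insert (by simp), ih]
    obtain ⟨d, rfl⟩ : ∃ d, α = m + 1 + d := ⟨α - (m + 1), by omega⟩
    have h1 : m + 1 + d - 1 - m = d := by omega
    have h2 : m + 1 + d - (m + 1) = d := by omega
    have h3 : m + 1 + d - m = d + 1 := by omega
    rw [lw, if_pos hm, h1, h2, h3]
    ring

theorem Good.wt_eq {α : ℕ} {T : Finset G.E} {f : G.E → ℕ} (h : Good α T f) :
    wt α f = ∏ a ∈ Tᶜ, lw α (f a) := by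
  simp only [wt, h.betti_lev, lw]
  rw [Finset.prod_mul_distrib, Finset.prod_pow_eq_pow_sum, Finset.prod_pow_eq_pow_sum,
    Finset.sum_comm]
  congr 2
  apply Finset.sum_congr rfl
  intro a _
  rw [← Finset.sum_filter, ← Finset.card_eq_sum_ones]
  have : (Finset.range (α - 1)).filter (fun k => f a < k + 1) = Finset.Ico (f a) (α - 1) := by
    ext k; simp; omega
  rw [this, Nat.card_Ico]

section path
variable {α : ℕ} {T : Finset G.E} (v : {e : G.E // e ∈ T} → Fin α) (a : G.E)

theorem le_vmaxPath (e : {e : G.E // e ∈ T}) (he : e.1 ∈ G.fundPath T a) :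
    (v e).1 ≤ G.vmaxPath T v a := by
  apply le_csSup
  · exact ⟨α, by rintro n ⟨e, _, rfl⟩; exact (v e).2.le⟩
  · exact ⟨e, he, rfl⟩

theorem exists_vmaxPath (e : {e : G.E // e ∈ T}) (he : e.1 ∈ G.fundPath T a) :
    ∃ e0 : {e : G.E // e ∈ T}, e0.1 ∈ G.fundPath T a ∧ (v e0).1 = G.vmaxPath T v a ∧
      ∀ e' : {e : G.E // e ∈ T},
        e'.1 ∈ G.fundPath T a → (v e').1 = G.vmaxPath T v a → e0.1 ≤ e'.1 := by
  classical
  have hm : G.vmaxPath T v a ∈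
      {n : ℕ | ∃ e : {e : G.E // e ∈ T}, e.1 ∈ G.fundPath T a ∧ (v e).1 = n} := by
    apply Nat.sSup_mem
    · exact ⟨_, e, he, rfl⟩
    · exact ⟨α, by rintro n ⟨e, _, rfl⟩; exact (v e).2.le⟩
  obtain ⟨e1, h1, h2⟩ := hm
  let S : Finset {e : G.E // e ∈ T} := Finset.univ.filter
    (fun e => e.1 ∈ G.fundPath T a ∧ (v e).1 = G.vmaxPath T v a)
  obtain ⟨e0, h0, hmin⟩ := S.exists_min_image (fun e => e.1) ⟨e1, by simp [S, h1, h2]⟩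
  simp only [S, Finset.mem_filter, Finset.mem_univ, true_and] at h0 hmin
  exact ⟨e0, h0.1, h0.2, fun e' h h' => hmin e' ⟨h, h'⟩⟩

/-- the threshold -/
noncomputable def thr : ℕ := G.vmaxPath T v a + G.deltaInd T v a

theorem thr_le (hα : 0 < α) : thr v a ≤ α := by
  have h1 : G.vmaxPath T v a < α := by
    by_cases h : ∃ e : {e : G.E // e ∈ T}, e.1 ∈ G.fundPath T a
    · obtain ⟨e, he⟩ := h
      obtain ⟨e0, _, h, _⟩ := exists_vmaxPath v a e he
      rw [← h]; exact (v e0).2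
    · have : {n : ℕ | ∃ e : {e : G.E // e ∈ T}, e.1 ∈ G.fundPath T a ∧ (v e).1 = n} = ∅ := by
        ext n
        constructor
        · rintro ⟨e, he, _⟩; exact absurd ⟨e, he⟩ h
        · intro h; cases h
      rw [vmaxPath, this]; simpa using hα
  have h2 : G.deltaInd T v a ≤ 1 := by
    unfold deltaInd; split_ifs <;> omega
  unfold thr; omega

theorem thr_iff {f : G.E → ℕ} (hv : ∀ e, f e.1 = (v e).1) (ha : a ∉ T) :
    (∀ e ∈ G.fundPath T a, klt f e a) ↔ thr v a ≤ f a := by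
  by_cases h : ∃ e : {e : G.E // e ∈ T}, e.1 ∈ G.fundPath T a
  · obtain ⟨e, he⟩ := h
    obtain ⟨e0, h0, h1, h2⟩ := exists_vmaxPath v a e he
    have hd : G.deltaInd T v a = if e0.1 < a then 1 else 0 := by
      unfold deltaInd
      congr 1
      apply propext
      constructor
      · rintro ⟨e', k1, k2, k3, _⟩
        exact lt_of_le_of_lt (h2 e' k1 k2) k3
      · intro h; exact ⟨e0, h0, h1, h, h2⟩
    rw [thr, hd]
    constructor
    · intro h
      have := h e0.1 h0
      rw [klt, hv e0, h1] at this
      rcases this with h | ⟨h, h'⟩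
      · split_ifs <;> omega
      · rw [if_neg (not_lt.2 h'.le)]; omega
    · intro h e' he'
      have h3 := le_vmaxPath v a ⟨e', he'.1⟩ he'
      have h4 := hv ⟨e', he'.1⟩
      rw [← h4] at h3
      simp only at h3
      rcases lt_or_ge (f e') (f a) with hlt | hge
      · exact Or.inl hlt
      · have hnl : ¬ e0.1 < a := by
          intro hl; rw [if_pos hl] at h; omega
        rw [if_neg hnl] at h
        have hne : a ≠ e0.1 := fun h => ha (h ▸ e0.2)
        refine Or.inr ⟨by omega, lt_of_lt_of_le (lt_of_le_of_ne (not_lt.1 hnl) hne)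
          (h2 ⟨e', he'.1⟩ he' ?_)⟩
        rw [← h4]; simp only; omega
  · have h0 : {n : ℕ | ∃ e : {e : G.E // e ∈ T}, e.1 ∈ G.fundPath T a ∧ (v e).1 = n} = ∅ := by
      ext n
      constructor
      · rintro ⟨e, he, _⟩; exact absurd ⟨e, he⟩ h
      · intro h; cases h
    have h1 : thr v a = 0 := by
      rw [thr, vmaxPath, h0, deltaInd, if_neg]
      · simp
      · rintro ⟨e, he, _⟩; exact h ⟨e, he⟩
    rw [h1]
    exact ⟨fun _ => Nat.zero_le _, fun _ e he => absurd ⟨⟨e, he.1⟩, he⟩ h⟩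

end path

theorem good_iff {α : ℕ} {T : Finset G.E} (hT : G.IsSpanningTree T)
    (v : {e : G.E // e ∈ T} → Fin α) {f : G.E → ℕ} (hv : ∀ e, f e.1 = (v e).1) :
    Good α T f ↔ ∀ a, a ∉ T → thr v a ≤ f a := by
  have h1 : ∀ e ∈ T, f e < α := fun e he => by
    have := hv ⟨e, he⟩
    simp only at this
    rw [this]; exact (v _).2
  simp only [Good, hT, true_and]
  refine ⟨fun h a ha => ?_, fun h => ⟨h1, fun a ha => ?_⟩⟩
  · rw [← thr_iff v a hv ha]
    intro e he
    have h2 := (conn_sub_tree hT Finset.inter_subset_left).1 (h.2 a ha) e he.1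
    by_contra hk
    exact (mem_fundPath hT he.1 ha).1 he (h2 (fun hm =>
      hk (mem_below.1 (Finset.mem_inter.1 hm).2)))
  · have h2 := (thr_iff v a hv ha).2 (h a ha)
    rw [conn_sub_tree hT Finset.inter_subset_left]
    intro e he hnot
    by_contra hc
    exact hnot (Finset.mem_inter.2 ⟨he, mem_below.2 (h2 e ((mem_fundPath hT he ha).2 hc))⟩)

/-- valuations attached to a valued tree -/
noncomputable def vals {α : ℕ} (T : Finset G.E) (v : {e : G.E // e ∈ T} → Fin α) :
    Finset (G.E → ℕ) :=
  Fintype.piFinset (fun e => if h : e ∈ T then {(v ⟨e, h⟩).1} else Finset.Icc (thr v e) α)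

theorem mem_vals {α : ℕ} {T : Finset G.E} (hT : G.IsSpanningTree T)
    (v : {e : G.E // e ∈ T} → Fin α) {f : G.E → ℕ} :
    f ∈ vals T v ↔ (∀ e, f e ≤ α) ∧ Good α T f ∧ ∀ e, f e.1 = (v e).1 := by
  rw [vals, Fintype.mem_piFinset]
  constructor
  · intro h
    have hv : ∀ e : {e : G.E // e ∈ T}, f e.1 = (v e).1 := by
      intro e
      have := h e.1
      rw [dif_pos e.2] at this
      simpa using this
    refine ⟨fun e => ?_, (good_iff hT v hv).2 (fun a ha => ?_), hv⟩
    · by_cases he : e ∈ T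
      · rw [hv ⟨e, he⟩]; exact (v _).2.le
      · have := h e
        rw [dif_neg he, Finset.mem_Icc] at this
        exact this.2
    · have := h a
      rw [dif_neg ha, Finset.mem_Icc] at this
      exact this.1
  · rintro ⟨h1, h2, h3⟩ e
    split_ifs with he
    · simpa using h3 ⟨e, he⟩
    · exact Finset.mem_Icc.2 ⟨(good_iff hT v h3).1 h2 e he, h1 e⟩

theorem sum_vals {α : ℕ} (hα : 0 < α) {T : Finset G.E} (hT : G.IsSpanningTree T)
    (v : {e : G.E // e ∈ T} → Fin α) :
    (X : Polynomial ℤ) ^ G.nT T v = ∑ f ∈ vals T v, wt α f := by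
  have h1 : ∑ f ∈ vals T v, wt α f =
      ∑ f ∈ vals T v, ∏ a, (if a ∈ T then 1 else lw α (f a)) := by
    apply Finset.sum_congr rfl
    intro f hf
    rw [((mem_vals hT v).1 hf).2.1.wt_eq, Finset.prod_ite, Finset.prod_const_one, one_mul]
    congr 1
    ext x; simp
  rw [h1, vals, ← Finset.prod_univ_sum (f := fun a j => if a ∈ T then 1 else lw α j), nT,
    ← Finset.prod_pow_eq_pow_sum, ← Finset.prod_mul_prod_compl T (fun a => ∑ j ∈ _, _)]
  symm
  rw [Finset.prod_eq_one, one_mul]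
  · symm
    apply Finset.prod_congr rfl
    intro a ha
    rw [Finset.mem_compl] at ha
    simp only [dif_neg ha, if_neg ha]
    rw [lw_sum (thr_le v a hα), thr, Nat.sub_sub]
  · intro a ha
    simp [ha]

theorem chain_sum {α : ℕ} (hα : 0 < α) (hα' : α - 1 < α) :
    (∑ᶠ c : {c : Fin α → Finset G.E //
        (∀ k l : Fin α, k ≤ l → c k ⊆ c l) ∧
        (G.restrictE (c ⟨α - 1, hα'⟩)).Connected},
      ((X : Polynomial ℤ) - 1) ^ (G.restrictE (c.1 ⟨α - 1, hα'⟩)).bettiNat *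
        (X : Polynomial ℤ) ^
          (∑ k ∈ Finset.univ.filter (fun k : Fin α => k.1 + 1 < α),
            (G.restrictE (c.1 k)).bettiNat)) =
    ∑ᶠ f : {f : G.E → ℕ // (∀ e, f e ≤ α) ∧ (G.restrictE (lev f α)).Connected}, wt α f.1 := by
  classical
  have hlast : ∀ f : G.E → ℕ, lev f ((⟨α - 1, hα'⟩ : Fin α).1 + 1) = lev f α := by
    intro f; simp only; rw [Nat.sub_add_cancel hα]
  symm
  let Φ : {f : G.E → ℕ // (∀ e, f e ≤ α) ∧ (G.restrictE (lev f α)).Connected} →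
    {c : Fin α → Finset G.E //
        (∀ k l : Fin α, k ≤ l → c k ⊆ c l) ∧
        (G.restrictE (c ⟨α - 1, hα'⟩)).Connected} := fun f =>
    ⟨fun k => lev f.1 (k.1 + 1), fun k l hkl e he => by
      rw [mem_lev] at *
      have : k.1 ≤ l.1 := hkl
      omega, by
      change (G.restrictE (lev f.1 ((⟨α - 1, hα'⟩ : Fin α).1 + 1))).Connected
      rw [hlast]; exact f.2.2⟩
  refine finsum_eq_of_bijective Φ ⟨?_, ?_⟩ ?_
  · rintro ⟨f, hf, hf'⟩ ⟨g, hg, hg'⟩ h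
    apply Subtype.ext
    funext e
    have h1 : ∀ k : Fin α, f e < k.1 + 1 ↔ g e < k.1 + 1 := by
      intro k
      have := congrFun (congrArg Subtype.val h) k
      simp only [Φ] at this
      rw [← mem_lev, this, mem_lev]
    have h2 := hf e
    have h3 := hg e
    simp only
    by_contra hne
    rcases lt_or_gt_of_ne hne with hlt | hlt
    · have := h1 ⟨f e, by omega⟩
      simp only at this
      omega
    · have := h1 ⟨g e, by omega⟩
      simp only at this
      omega
  · rintro ⟨c, hc, hc'⟩
    let f : G.E → ℕ := fun e => (Finset.univ.filter (fun k : Fin α => e ∉ c k)).card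
    have hf : ∀ k : Fin α, lev f (k.1 + 1) = c k := by
      intro k
      ext e
      rw [mem_lev]
      constructor
      · intro h
        by_contra he
        have hsub : Finset.Iic k ⊆ Finset.univ.filter (fun k : Fin α => e ∉ c k) := by
          intro l hl
          simp only [Finset.mem_filter, Finset.mem_univ, true_and]
          exact fun h => he (hc l k (Finset.mem_Iic.1 hl) h)
        have := Finset.card_le_card hsub
        rw [Fin.card_Iic] at this
        simp only [f] at h
        omega
      · intro he
        have hsub : Finset.univ.filter (fun k : Fin α => e ∉ c k) ⊆ Finset.Iio k := by
          intro l hl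
          simp only [Finset.mem_filter, Finset.mem_univ, true_and] at hl
          rw [Finset.mem_Iio]
          by_contra hk
          exact hl (hc k l (not_lt.1 hk) he)
        have := Finset.card_le_card hsub
        rw [Fin.card_Iio] at this
        simp only [f]
        omega
    refine ⟨⟨f, fun e => ?_, ?_⟩, ?_⟩
    · refine (Finset.card_le_univ _).trans ?_
      simp
    · rw [← hlast, hf]; exact hc'
    · apply Subtype.ext
      funext k
      exact hf k
  · intro f
    simp only [Φ, wt, hlast]
    congr 2
    symm
    refine Finset.sum_bij (fun k _ => k.1) ?_ ?_ ?_ ?_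
    · intro k hk
      simp only [Finset.mem_filter, Finset.mem_univ, true_and] at hk
      rw [Finset.mem_range]; omega
    · intro k _ l _ h; exact Fin.ext h
    · intro b hb
      rw [Finset.mem_range] at hb
      exact ⟨⟨b, by omega⟩, by simp; omega, rfl⟩
    · intro k _; rfl

theorem main_sum {α : ℕ} (hα : 0 < α) :
    (∑ᶠ T : {T : Finset G.E // G.IsSpanningTree T},
      ∑ᶠ v : ({e : G.E // e ∈ T.1} → Fin α), (X : Polynomial ℤ) ^ G.nT T.1 v) =
    ∑ᶠ f : {f : G.E → ℕ // (∀ e, f e ≤ α) ∧ (G.restrictE (lev f α)).Connected}, wt α f.1 := by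
  classical
  let F : Finset (G.E → ℕ) := (Fintype.piFinset (fun _ : G.E => Finset.range (α + 1))).filter
    (fun f => (G.restrictE (lev f α)).Connected)
  have hF : ∀ f, f ∈ F ↔ (∀ e, f e ≤ α) ∧ (G.restrictE (lev f α)).Connected := by
    intro f
    simp [F, Fintype.mem_piFinset, Nat.lt_succ_iff]
  have hR : ∑ᶠ f : {f : G.E → ℕ // (∀ e, f e ≤ α) ∧ (G.restrictE (lev f α)).Connected},
      wt α f.1 = ∑ f ∈ F, wt α f := by
    rw [← finsum_mem_finset_eq_sum, ← finsum_subtype_eq_finsum_cond]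
    exact finsum_eq_of_bijective (fun f => ⟨f.1, (hF _).2 f.2⟩)
      ⟨fun a b h => Subtype.ext (by simpa using h), fun b => ⟨⟨b.1, (hF _).1 b.2⟩, rfl⟩⟩
      (fun _ => rfl)
  rw [hR, finsum_eq_sum_of_fintype]
  simp only [finsum_eq_sum_of_fintype]
  have h1 : ∀ T : {T : Finset G.E // G.IsSpanningTree T},
      ∀ v : ({e : G.E // e ∈ T.1} → Fin α), (X : Polynomial ℤ) ^ G.nT T.1 v =
        ∑ f ∈ vals T.1 v, wt α f := fun T v => sum_vals hα T.2 v
  simp only [h1]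
  rw [Finset.sum_sigma', Finset.sum_sigma']
  refine Finset.sum_bij (fun p _ => p.2) ?_ ?_ ?_ ?_
  · rintro ⟨⟨T, v⟩, f⟩ hp
    simp only [Finset.mem_sigma, Finset.mem_univ, true_and] at hp
    rw [mem_vals T.2] at hp
    exact (hF f).2 ⟨hp.1, hp.2.1.lev_connected⟩
  · rintro ⟨⟨⟨T, hT⟩, v⟩, f⟩ hp ⟨⟨⟨T', hT'⟩, v'⟩, f'⟩ hp' h
    simp only [Finset.mem_sigma, Finset.mem_univ, true_and] at hp hp'
    rw [mem_vals hT] at hp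
    rw [mem_vals hT'] at hp'
    simp only at h
    subst h
    obtain rfl : T = T' := hp.2.1.eq_kruskal.symm.trans hp'.2.1.eq_kruskal
    obtain rfl : v = v' := by
      funext e
      exact Fin.ext ((hp.2.2 e).symm.trans (hp'.2.2 e))
    rfl
  · intro f hf
    rw [hF] at hf
    have hg := kruskal_good hf.2
    refine ⟨⟨⟨⟨kruskal α f, hg.1⟩, fun e => ⟨f e.1, hg.2.1 e.1 e.2⟩⟩, f⟩, ?_, rfl⟩
    simp only [Finset.mem_sigma, Finset.mem_univ, true_and]
    rw [mem_vals hg.1]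
    exact ⟨hf.1, hg, fun _ => rfl⟩
  · intro p _; rfl

end weights

end Multigraph

/-- For a connected graph `Q` with a fixed total order on its edges and
`α ≥ 1`, the generating function of valued spanning trees
`Σ_{(T, v : T → {0,…,α−1})} q^{n_T}` equals the toric Kac polynomial
`A_{Q,1,α}(q) = Σ_{E_1 ⊆ … ⊆ E_α ⊆ Q_1, Q|_{E_α} connected}
   (q−1)^{b(Q|_{E_α})} q^{Σ_{k<α} b(Q|_{E_k})}`. -/
theorem valued_spanning_tree_identity (G : Multigraph) [Fintype G.V] [Fintype G.E]
    [LinearOrder G.E] (hG : G.Connected) (α : ℕ) (hα : 0 < α) :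
    (∑ᶠ T : {T : Finset G.E // G.IsSpanningTree T},
      ∑ᶠ v : ({e : G.E // e ∈ T.1} → Fin α), (X : Polynomial ℤ) ^ G.nT T.1 v)
    =
    ∑ᶠ c : {c : Fin α → Finset G.E //
        (∀ k l : Fin α, k ≤ l → c k ⊆ c l) ∧
        (G.restrictE (c ⟨α - 1, by omega⟩)).Connected},
      ((X : Polynomial ℤ) - 1) ^ (G.restrictE (c.1 ⟨α - 1, by omega⟩)).bettiNat *
        (X : Polynomial ℤ) ^
          (∑ k ∈ Finset.univ.filter (fun k : Fin α => k.1 + 1 < α),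
            (G.restrictE (c.1 k)).bettiNat) := by
  rw [Multigraph.main_sum hα, Multigraph.chain_sum hα]
end
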